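/- arXiv:math/0310364 — 4 statements merged into one kernel-verified Lean document; each statement's English description precedes it below -/
import Mathlib

section
/- Let ℓ > 0 and let s be a complex number with Re(s) > 1/2. Then (2s−1) ∫₁^{e^ℓ} ∫₀^∞ [ ∑_{m∈ℤ, m≠0} g_s( ((x − e^{mℓ}x)² + (y + e^{mℓ}y)²)/(4 e^{mℓ} y²) ) − ∑_{m∈ℤ} g_s( ((x + e^{mℓ}x)² + (y + e^{mℓ}y)²)/(4 e^{mℓ} y²) ) ] y^{-2} dx dy = −ℓ/4 + ∑_{k=0}^∞ 2ℓ e^{−(s+2k+1)ℓ}/(1 − e^{−(s+2k+1)ℓ}), the right-hand side being the logarithmic derivative Z_F'(s)/Z_F(s) of the funnel zeta function. (This is Proposition 2.3 of the paper, the formula Φ_F(s) = Z_F'(s)/Z_F(s) for the regularized resolvent trace of the Dirichlet Laplacian on a hyperbolic funnel, written out via the method of images.) -/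
/-!
At height `y` the images of a point lie on a horizontal line, and their point-pair invariants are
`cosh² θ + (a x)²` with `θ = mℓ/2` and `a = |sinh θ| / y` (direct images) or `a = cosh θ / y`
(reflected images). Integrating Green's function over `b + v²` turns the exponent `-s` of Euler's
integrand into `1/2 - s`. For `b = cosh² θ` the substitutions `t = cosh² θ - w²` and
`w ↦ w - sinh θ cosh θ / w` (Cauchy–Schlömilch) reduce what is left to a Beta integral, with value
a multiple of `exp (-(2s - 1)|θ|) / (2s - 1)`. The sum over `m` of
`exp (-(2s - 1)|θ|) (1 / |sinh θ| - 1 / cosh θ)` is a Lambert series, and summing its geometric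
double series in the other order gives the logarithmic derivative of the zeta function. The
remaining integral `∫ dy / y` over the fundamental interval contributes the factor `ℓ`.
-/

open MeasureTheory

/-- The Green's function of the resolvent `(Δ_ℍ - s(1-s))⁻¹` on the hyperbolic plane,
expressed in the point-pair invariant `σ = cosh²(d(z,z')/2)`, via Euler's integral
representation: `g_s(σ) = (1/(4π)) ∫₀¹ t^(s-1) (1-t)^(s-1) (σ-t)^(-s) dt`. -/
noncomputable def greenH (s : ℂ) (σ : ℝ) : ℂ :=
  (1 / (4 * (Real.pi : ℂ))) * ∫ t in Set.Ioo (0:ℝ) 1,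
    (t : ℂ) ^ (s - 1) * ((1 : ℂ) - (t : ℂ)) ^ (s - 1) * ((σ : ℂ) - (t : ℂ)) ^ (-s)

open Set (Ioo Ioi Icc)

lemma ofReal_cpow_eq_exp {x : ℝ} (hx : 0 < x) (w : ℂ) :
    (x : ℂ) ^ w = Complex.exp (w * Real.log x) := by
  rw [Complex.cpow_def_of_ne_zero (Complex.ofReal_ne_zero.2 hx.ne'), Complex.ofReal_log hx.le,
    mul_comm]

lemma ofReal_eq_exp_log {x : ℝ} (hx : 0 < x) : (x : ℂ) = Complex.exp (Real.log x) := by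
  rw [← Complex.ofReal_exp, Real.exp_log hx]

lemma beta_integrand_integrableOn {u v : ℂ} (hu : 0 < u.re) (hv : 0 < v.re) :
    IntegrableOn (fun t : ℝ => (t : ℂ) ^ (u - 1) * (1 - (t : ℂ)) ^ (v - 1)) (Ioo 0 1) :=
  (intervalIntegrable_iff_integrableOn_Ioo_of_le zero_le_one).1
    (Complex.betaIntegral_convergent hu hv)

lemma betaIntegral_eq_setIntegral (u v : ℂ) :
    Complex.betaIntegral u v =
      ∫ t in Ioo (0 : ℝ) 1, (t : ℂ) ^ (u - 1) * (1 - (t : ℂ)) ^ (v - 1) := by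
  rw [Complex.betaIntegral, intervalIntegral.integral_of_le zero_le_one,
    integral_Ioc_eq_integral_Ioo]

section EulerKernel

/-- Euler's hypergeometric integrand `t^(s-1) (1-t)^(s-1) (b-t)^w`. With `w = -s` it is the
integrand of `greenH s b`; integrating that one over a line of arguments `b + v²` produces the
exponent `w = 1/2 - s`. -/
noncomputable def eulerKernel (s w : ℂ) (b t : ℝ) : ℂ :=
  (t : ℂ) ^ (s - 1) * (1 - (t : ℂ)) ^ (s - 1) * ((b : ℂ) - (t : ℂ)) ^ w

variable {s w : ℂ} {b t : ℝ}

lemma measurable_eulerKernel (s w : ℂ) : Measurable (Function.uncurry (eulerKernel s w)) := by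
  simp only [Function.uncurry_def, eulerKernel]
  fun_prop

lemma norm_eulerKernel (s w : ℂ) (hb : 1 ≤ b) (ht : t ∈ Ioo (0 : ℝ) 1) :
    ‖eulerKernel s w b t‖ = t ^ (s.re - 1) * (1 - t) ^ (s.re - 1) * (b - t) ^ w.re := by
  have h1t : 0 < 1 - t := sub_pos.2 ht.2
  have hbt : 0 < b - t := sub_pos.2 (ht.2.trans_le hb)
  rw [eulerKernel, ← Complex.ofReal_one, ← Complex.ofReal_sub, ← Complex.ofReal_sub, norm_mul,
    norm_mul, Complex.norm_cpow_eq_rpow_re_of_pos ht.1, Complex.norm_cpow_eq_rpow_re_of_pos h1t,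
    Complex.norm_cpow_eq_rpow_re_of_pos hbt, Complex.sub_re, Complex.ofReal_one, Complex.one_re]

lemma ofReal_norm_eulerKernel (s w : ℂ) (hb : 1 ≤ b) (ht : t ∈ Ioo (0 : ℝ) 1) :
    (‖eulerKernel s w b t‖ : ℂ) = eulerKernel s.re w.re b t := by
  have h1t : 0 ≤ 1 - t := sub_nonneg.2 ht.2.le
  have hbt : 0 ≤ b - t := sub_nonneg.2 (ht.2.le.trans hb)
  rw [norm_eulerKernel s w hb ht, eulerKernel, Complex.ofReal_mul, Complex.ofReal_mul,
    Complex.ofReal_cpow ht.1.le, Complex.ofReal_cpow h1t, Complex.ofReal_cpow hbt]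
  push_cast
  rfl

lemma eulerKernel_one (s w : ℂ) (ht : t < 1) :
    eulerKernel s w 1 t = (t : ℂ) ^ (s - 1) * (1 - (t : ℂ)) ^ (s + w - 1) := by
  have h1t : 1 - (t : ℂ) ≠ 0 := sub_ne_zero.2 (by exact_mod_cast ht.ne')
  rw [eulerKernel, mul_assoc, Complex.ofReal_one, ← Complex.cpow_add _ _ h1t, sub_add_eq_add_sub]

lemma integrableOn_eulerKernel (hb : 1 ≤ b) (hs : 0 < s.re) (hw : w.re ≤ 0)
    (hsw : 0 < (s + w).re) : IntegrableOn (eulerKernel s w b) (Ioo 0 1) := by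
  have hone : IntegrableOn (eulerKernel s w 1) (Ioo 0 1) :=
    (beta_integrand_integrableOn hs hsw).congr_fun
      (fun t ht => (eulerKernel_one s w ht.2).symm) measurableSet_Ioo
  refine Integrable.mono hone (measurable_eulerKernel s w).of_uncurry_left.aestronglyMeasurable <|
    (ae_restrict_iff' measurableSet_Ioo).2 <| .of_forall fun t ht => ?_
  rw [norm_eulerKernel s w hb ht, norm_eulerKernel s w le_rfl ht]
  have h1t : 0 < 1 - t := sub_pos.2 ht.2
  have ht₀ : 0 < t := ht.1
  exact mul_le_mul_of_nonneg_left
    (Real.rpow_le_rpow_of_nonpos h1t (sub_le_sub_right hb t) hw) (by positivity)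

lemma integral_eulerKernel_one (s w : ℂ) :
    ∫ t in Ioo (0 : ℝ) 1, eulerKernel s w 1 t = Complex.betaIntegral s (s + w) := by
  rw [betaIntegral_eq_setIntegral]
  exact setIntegral_congr_fun measurableSet_Ioo fun t ht => eulerKernel_one s w ht.2

end EulerKernel

section CauchyKernel

variable {c : ℝ} {s : ℂ}

lemma hasDerivAt_div_add_sq (hc : 0 < c) (v : ℝ) :
    HasDerivAt (fun v => c / (c + v ^ 2)) (-(2 * c * v / (c + v ^ 2) ^ 2)) v := by
  have h := (((hasDerivAt_pow 2 v).const_add c).inv (by positivity)).const_mul c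
  exact h.congr_deriv (by ring)

lemma strictAntiOn_div_add_sq (hc : 0 < c) :
    StrictAntiOn (fun v => c / (c + v ^ 2)) (Ioi 0) := fun v hv w _ hvw => by
  have hv : 0 < v := hv
  dsimp only
  gcongr

lemma image_div_add_sq (hc : 0 < c) : (fun v => c / (c + v ^ 2)) '' Ioi 0 = Ioo 0 1 := by
  refine Set.Subset.antisymm ?_ fun t ⟨ht₀, ht₁⟩ => ?_
  · rintro _ ⟨v, hv : 0 < v, rfl⟩
    exact ⟨by positivity, (div_lt_one (by positivity)).2 (by nlinarith)⟩
  · have ht : 0 < c * (1 - t) / t := div_pos (mul_pos hc (sub_pos.2 ht₁)) ht₀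
    refine ⟨√(c * (1 - t) / t), Real.sqrt_pos.2 ht, ?_⟩
    dsimp only
    rw [Real.sq_sqrt ht.le]
    field_simp
    ring

lemma beta_integrand_comp_div_add_sq (hc : 0 < c) (s : ℂ) {v : ℝ} (hv : 0 < v) :
    (2 * c * v / (c + v ^ 2) ^ 2) • (((c / (c + v ^ 2) : ℝ) : ℂ) ^ (s - 1 / 2 - 1) *
        (1 - ((c / (c + v ^ 2) : ℝ) : ℂ)) ^ ((1 / 2 : ℂ) - 1)) =
      2 * (c : ℂ) ^ (s - 1 / 2) * ((c + v ^ 2 : ℝ) : ℂ) ^ (-s) := by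
  have hcv : 0 < c + v ^ 2 := by positivity
  have hcompl : 1 - ((c / (c + v ^ 2) : ℝ) : ℂ) = ((v ^ 2 / (c + v ^ 2) : ℝ) : ℂ) := by
    rw [← Complex.ofReal_one, ← Complex.ofReal_sub]
    congr 1
    field_simp
    ring
  have hjac : ((2 * c * v / (c + v ^ 2) ^ 2 : ℝ) : ℂ) =
      2 * Complex.exp (Real.log c + Real.log v - 2 * Real.log (c + v ^ 2)) := by
    rw [Complex.exp_sub, Complex.exp_add, two_mul (Real.log _ : ℂ), Complex.exp_add,
      ← ofReal_eq_exp_log hc, ← ofReal_eq_exp_log hv, ← ofReal_eq_exp_log hcv]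
    push_cast
    ring
  rw [hcompl, Complex.real_smul, hjac, ofReal_cpow_eq_exp (by positivity),
    ofReal_cpow_eq_exp (by positivity), ofReal_cpow_eq_exp hc, ofReal_cpow_eq_exp hcv,
    Real.log_div hc.ne' hcv.ne', Real.log_div (by positivity) hcv.ne', Real.log_pow]
  simp only [mul_assoc, ← Complex.exp_add]
  push_cast
  ring_nf

lemma integrableOn_add_sq_cpow_neg (hc : 0 < c) (hs : 1 / 2 < s.re) :
    IntegrableOn (fun v : ℝ => ((c + v ^ 2 : ℝ) : ℂ) ^ (-s)) (Ioi 0) := by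
  have hbeta := beta_integrand_integrableOn (u := s - 1 / 2) (v := 1 / 2)
    (by simpa using hs) (by norm_num)
  rw [← image_div_add_sq hc, integrableOn_image_iff_integrableOn_deriv_smul_of_antitoneOn
    measurableSet_Ioi (fun v _ => (hasDerivAt_div_add_sq hc v).hasDerivWithinAt)
    (strictAntiOn_div_add_sq hc).antitoneOn] at hbeta
  have hconst : (2 * (c : ℂ) ^ (s - 1 / 2)) ≠ 0 := by
    simp [Complex.cpow_eq_zero_iff, hc.ne']
  refine (integrable_const_mul_iff (IsUnit.mk0 _ hconst) _).1
    (hbeta.congr_fun (fun v hv => ?_) measurableSet_Ioi)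
  dsimp only
  rw [neg_neg, beta_integrand_comp_div_add_sq hc s hv]

lemma integral_add_sq_cpow_neg (hc : 0 < c) (s : ℂ) :
    ∫ v in Ioi (0 : ℝ), ((c + v ^ 2 : ℝ) : ℂ) ^ (-s) =
      (c : ℂ) ^ (1 / 2 - s) * (Complex.betaIntegral (s - 1 / 2) (1 / 2) / 2) := by
  have hsub : Complex.betaIntegral (s - 1 / 2) (1 / 2) =
      2 * (c : ℂ) ^ (s - 1 / 2) * ∫ v in Ioi (0 : ℝ), ((c + v ^ 2 : ℝ) : ℂ) ^ (-s) := by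
    rw [betaIntegral_eq_setIntegral, ← image_div_add_sq hc,
      integral_image_eq_integral_deriv_smul_of_antitoneOn measurableSet_Ioi
        (fun v _ => (hasDerivAt_div_add_sq hc v).hasDerivWithinAt)
        (strictAntiOn_div_add_sq hc).antitoneOn, ← integral_const_mul]
    exact setIntegral_congr_fun measurableSet_Ioi fun v hv => by
      rw [neg_neg, beta_integrand_comp_div_add_sq hc s hv]
  have hne : (c : ℂ) ^ (s - 1 / 2) ≠ 0 := by simp [Complex.cpow_eq_zero_iff, hc.ne']
  rw [hsub, ← neg_sub s, Complex.cpow_neg, mul_assoc, mul_div_cancel_left₀ _ two_ne_zero,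
    inv_mul_cancel_left₀ hne]

end CauchyKernel

section CauchySchlomilch

variable {E : Type*} [NormedAddCommGroup E] [NormedSpace ℝ E] {f : ℝ → E} {a b : ℝ}

lemma pos_of_mem_uIcc {w : ℝ} (ha : 0 < a) (hb : 0 < b) (hw : w ∈ Set.uIcc a b) : 0 < w :=
  (lt_min ha hb).trans_le hw.1

lemma hasDerivAt_const_div (k : ℝ) {w : ℝ} (hw : w ≠ 0) :
    HasDerivAt (fun w => k / w) (-(k / w ^ 2)) w := by
  simpa [div_eq_mul_inv] using (hasDerivAt_inv hw).const_mul k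

lemma hasDerivAt_sub_const_div (k : ℝ) {w : ℝ} (hw : w ≠ 0) :
    HasDerivAt (fun w => w - k / w) (1 + k / w ^ 2) w :=
  ((hasDerivAt_id w).sub (hasDerivAt_const_div k hw)).congr_deriv (by ring)

lemma intervalIntegrable_and_integral_deriv_smul_comp_sub_div (ha : 0 < a) (hb : 0 < b)
    (hf : IntervalIntegrable f volume (-(b - a)) (b - a)) :
    IntervalIntegrable (fun w => (1 + a * b / w ^ 2) • f (w - a * b / w)) volume a b ∧
      ∫ w in a..b, (1 + a * b / w ^ 2) • f (w - a * b / w) = ∫ p in -(b - a)..(b - a), f p := by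
  have hleft : a - a * b / a = -(b - a) := by field_simp; ring
  have hright : b - a * b / b = b - a := by field_simp
  have hderiv : ∀ w ∈ Set.uIcc a b,
      HasDerivAt (fun w => w - a * b / w) (1 + a * b / w ^ 2) w := fun w hw =>
    hasDerivAt_sub_const_div _ (pos_of_mem_uIcc ha hb hw).ne'
  have hcont : ContinuousOn (fun w => w - a * b / w) (Set.uIcc a b) := fun w hw =>
    (hderiv w hw).continuousAt.continuousWithinAt
  have hderiv' := fun w (hw : w ∈ Ioo (min a b) (max a b)) =>
    hderiv w (Set.Ioo_subset_Icc_self hw)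
  have hnonneg : ∀ w ∈ Ioo (min a b) (max a b), 0 ≤ 1 + a * b / w ^ 2 := fun _ _ => by positivity
  rw [← hleft, ← hright] at hf
  refine ⟨(intervalIntegral.integrable_deriv_smul_comp_iff_of_deriv_nonneg
    hcont hderiv' hnonneg).2 hf, ?_⟩
  simpa only [Function.comp_apply, hleft, hright] using
    intervalIntegral.integral_deriv_smul_comp_of_deriv_nonneg
    (g := f) hcont hderiv' hnonneg

lemma integral_deriv_smul_comp_involution (hf : f.Even) (ha : 0 < a) (hb : 0 < b) :
    ∫ w in a..b, (a * b / w ^ 2) • f (w - a * b / w) = ∫ w in a..b, f (w - a * b / w) := by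
  have hderiv : ∀ w ∈ Set.uIcc a b, HasDerivAt (fun w => a * b / w) (-(a * b / w ^ 2)) w :=
    fun w hw => hasDerivAt_const_div _ (pos_of_mem_uIcc ha hb hw).ne'
  have hsubst := intervalIntegral.integral_deriv_smul_comp_of_deriv_nonpos
    (g := fun w => f (w - a * b / w))
    (fun w hw => (hderiv w hw).continuousAt.continuousWithinAt)
    (fun w hw => hderiv w (Set.Ioo_subset_Icc_self hw))
    (fun w _ => neg_nonpos.2 (by positivity))
  rw [mul_div_cancel_left₀ b ha.ne', mul_div_cancel_right₀ a hb.ne',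
    intervalIntegral.integral_symm a b, ← neg_eq_iff_eq_neg, ← intervalIntegral.integral_neg]
    at hsubst
  rw [← hsubst]
  refine intervalIntegral.integral_congr fun w hw => ?_
  have hw₀ : w ≠ 0 := (pos_of_mem_uIcc ha hb hw).ne'
  have hflip : a * b / w - a * b / (a * b / w) = -(w - a * b / w) := by field_simp; ring
  simp only [Function.comp_apply, neg_smul, neg_neg, hflip, hf _]

theorem integral_comp_sub_mul_div (hf : f.Even) (ha : 0 < a) (hb : 0 < b)
    (hint : IntervalIntegrable f volume (-(b - a)) (b - a)) :
    ∫ w in a..b, f (w - a * b / w) = (1 / 2 : ℝ) • ∫ p in -(b - a)..(b - a), f p := by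
  obtain ⟨hint_comp, hsubst⟩ :=
    intervalIntegrable_and_integral_deriv_smul_comp_sub_div ha hb hint
  have hpos : ∀ w ∈ Set.uIcc a b, w ≠ 0 := fun w hw => (pos_of_mem_uIcc ha hb hw).ne'
  have hint₁ : IntervalIntegrable (fun w => f (w - a * b / w)) volume a b := by
    refine (hint_comp.continuousOn_smul (f := fun w => (1 + a * b / w ^ 2)⁻¹) ?_).congr
      fun _ _ => ?_
    · exact ContinuousOn.inv₀ (by fun_prop (disch := aesop)) fun w _ => by positivity
    · exact inv_smul_smul₀ (by positivity) _
  have hint₂ : IntervalIntegrable (fun w => (a * b / w ^ 2) • f (w - a * b / w)) volume a b :=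
    hint₁.continuousOn_smul (by fun_prop (disch := aesop))
  simp only [add_smul, one_smul] at hsubst
  rw [← hsubst, intervalIntegral.integral_add hint₁ hint₂,
    integral_deriv_smul_comp_involution hf ha hb, ← two_smul ℝ, smul_smul]
  norm_num

end CauchySchlomilch

section ReducedIntegral

variable {s : ℂ}

lemma two_cpow_mul_betaIntegral_self (hs : 0 < s.re) :
    (2 : ℂ) ^ (2 * s - 1) * Complex.betaIntegral s s = Complex.betaIntegral s (1 / 2) := by
  have hΓhalf : Complex.Gamma (s + 1 / 2) ≠ 0 :=
    Complex.Gamma_ne_zero_of_re_pos (by simp; linarith)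
  have hΓtwo : Complex.Gamma (2 * s) ≠ 0 := Complex.Gamma_ne_zero_of_re_pos (by simpa)
  have hsqrt : (Real.pi : ℂ) ^ (1 / 2 : ℂ) = ((√Real.pi : ℝ) : ℂ) := by
    rw [Real.sqrt_eq_rpow, Complex.ofReal_cpow Real.pi_pos.le]
    norm_num
  have htwo : (2 : ℂ) ^ (2 * s - 1) * 2 ^ (1 - 2 * s) = 1 := by
    rw [← Complex.cpow_add _ _ two_ne_zero, sub_add_sub_cancel, sub_self, Complex.cpow_zero]
  rw [Complex.betaIntegral_eq_Gamma_mul_div _ _ hs hs,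
    Complex.betaIntegral_eq_Gamma_mul_div _ _ hs (by norm_num), Complex.Gamma_one_half_eq, hsqrt,
    ← two_mul, mul_div_assoc', div_eq_div_iff hΓtwo hΓhalf]
  linear_combination (2 : ℂ) ^ (2 * s - 1) * Complex.Gamma s * Complex.Gamma_mul_Gamma_add_half s +
    Complex.Gamma s * Complex.Gamma (2 * s) * ((√Real.pi : ℝ) : ℂ) * htwo

lemma sq_sub_sq_cpow_comp_affine {E t : ℝ} (hE : 0 < E) (ht : t ∈ Icc (0 : ℝ) 1) (s : ℂ) :
    (2 * E) • ((E ^ 2 - (2 * E * t - E) ^ 2 : ℝ) : ℂ) ^ (s - 1) =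
      ((2 * E : ℝ) : ℂ) ^ (2 * s - 1) * ((t : ℂ) ^ (s - 1) * (1 - (t : ℂ)) ^ (s - 1)) := by
  have hfactor : E ^ 2 - (2 * E * t - E) ^ 2 = (2 * E) ^ 2 * (t * (1 - t)) := by ring
  have hE₂ : 0 < 2 * E := by positivity
  have h1t : 0 ≤ 1 - t := sub_nonneg.2 ht.2
  have hpow : ((2 * E : ℝ) : ℂ) * (((2 * E) ^ 2 : ℝ) : ℂ) ^ (s - 1) =
      ((2 * E : ℝ) : ℂ) ^ (2 * s - 1) := by
    rw [ofReal_cpow_eq_exp (by positivity), ofReal_cpow_eq_exp hE₂, Real.log_pow,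
      ofReal_eq_exp_log hE₂, ← Complex.exp_add]
    push_cast
    ring_nf
  rw [Complex.real_smul, hfactor, Complex.ofReal_mul (_ ^ 2),
    Complex.mul_cpow_ofReal_nonneg (by positivity) (mul_nonneg ht.1 h1t), ← mul_assoc, hpow,
    Complex.ofReal_mul t, Complex.mul_cpow_ofReal_nonneg ht.1 h1t, Complex.ofReal_sub,
    Complex.ofReal_one]

lemma intervalIntegrable_and_integral_sq_sub_sq_cpow {E : ℝ} (hE : 0 < E) (hs : 0 < s.re) :
    IntervalIntegrable (fun p : ℝ => ((E ^ 2 - p ^ 2 : ℝ) : ℂ) ^ (s - 1)) volume (-E) E ∧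
      ∫ p in -E..E, ((E ^ 2 - p ^ 2 : ℝ) : ℂ) ^ (s - 1) =
        ((2 * E : ℝ) : ℂ) ^ (2 * s - 1) * Complex.betaIntegral s s := by
  have hleft : 2 * E * 0 - E = -E := by ring
  have hright : 2 * E * 1 - E = E := by ring
  have hcont : ContinuousOn (fun t => 2 * E * t - E) (Set.uIcc 0 1) := by fun_prop
  have hderiv : ∀ t ∈ Ioo (min (0 : ℝ) 1) (max 0 1),
      HasDerivAt (fun t => 2 * E * t - E) (2 * E) t := fun t _ => by
    simpa using ((hasDerivAt_id t).const_mul (2 * E)).sub_const E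
  have hnonneg : ∀ t ∈ Ioo (min (0 : ℝ) 1) (max 0 1), 0 ≤ 2 * E := fun _ _ => by positivity
  have hcomp : Set.EqOn
      (fun t => (2 * E) • (fun p : ℝ => ((E ^ 2 - p ^ 2 : ℝ) : ℂ) ^ (s - 1)) (2 * E * t - E))
      (fun t : ℝ => ((2 * E : ℝ) : ℂ) ^ (2 * s - 1) *
        ((t : ℂ) ^ (s - 1) * (1 - (t : ℂ)) ^ (s - 1))) (Set.uIcc 0 1) := fun t ht =>
    sq_sub_sq_cpow_comp_affine hE (by rwa [Set.uIcc_of_le zero_le_one] at ht) s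
  have hsubst := intervalIntegral.integral_deriv_smul_comp_of_deriv_nonneg
    (g := fun p : ℝ => ((E ^ 2 - p ^ 2 : ℝ) : ℂ) ^ (s - 1)) hcont hderiv hnonneg
  have hiff := intervalIntegral.integrable_deriv_smul_comp_iff_of_deriv_nonneg
    (g := fun p : ℝ => ((E ^ 2 - p ^ 2 : ℝ) : ℂ) ^ (s - 1)) hcont hderiv hnonneg
  simp only [Function.comp_def, hleft, hright] at hsubst hiff
  refine ⟨hiff.1 (((Complex.betaIntegral_convergent hs hs).const_mul _).congr fun t ht =>
    (hcomp (Set.uIoc_subset_uIcc ht)).symm), ?_⟩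
  rw [← hsubst, intervalIntegral.integral_congr hcomp, intervalIntegral.integral_const_mul,
    Complex.betaIntegral]

lemma eulerKernel_comp_sub_sq {S C w : ℝ} (hS : 0 < S) (hC : C ^ 2 = S ^ 2 + 1)
    (hw : w ∈ Icc S C) (s : ℂ) :
    (2 * w) • eulerKernel s (1 / 2 - s) (C ^ 2) (C ^ 2 - w ^ 2) =
      2 * (((C - S) ^ 2 - (w - S * C / w) ^ 2 : ℝ) : ℂ) ^ (s - 1) := by
  have hw₀ : 0 < w := hS.trans_le hw.1
  have ht₀ : 0 ≤ C ^ 2 - w ^ 2 := by nlinarith [hw.2]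
  have ht₁ : 0 ≤ w ^ 2 - S ^ 2 := by nlinarith [hw.1]
  have hcompl : 1 - ((C ^ 2 - w ^ 2 : ℝ) : ℂ) = ((w ^ 2 - S ^ 2 : ℝ) : ℂ) := by
    rw [hC]; push_cast; ring
  have hrest : ((C ^ 2 : ℝ) : ℂ) - ((C ^ 2 - w ^ 2 : ℝ) : ℂ) = ((w ^ 2 : ℝ) : ℂ) := by
    push_cast; ring
  have hquot : (C - S) ^ 2 - (w - S * C / w) ^ 2 =
      (C ^ 2 - w ^ 2) * (w ^ 2 - S ^ 2) * (w ^ 2)⁻¹ := by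
    field_simp
    ring
  have hpow : (w : ℂ) * ((w ^ 2 : ℝ) : ℂ) ^ (1 / 2 - s) = (((w ^ 2)⁻¹ : ℝ) : ℂ) ^ (s - 1) := by
    rw [ofReal_cpow_eq_exp (by positivity), ofReal_cpow_eq_exp (by positivity), Real.log_inv,
      Real.log_pow, ofReal_eq_exp_log hw₀, ← Complex.exp_add]
    push_cast
    ring_nf
  rw [eulerKernel, hcompl, hrest, hquot, Complex.ofReal_mul,
    Complex.mul_cpow_ofReal_nonneg (mul_nonneg ht₀ ht₁) (by positivity), Complex.ofReal_mul,
    Complex.mul_cpow_ofReal_nonneg ht₀ ht₁, ← hpow, Complex.real_smul]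
  push_cast
  ring

lemma integral_eulerKernel_eq_integral_comp_sub_div {S C : ℝ} (hS : 0 < S) (hSC : S ≤ C)
    (hC : C ^ 2 = S ^ 2 + 1) (s : ℂ) :
    ∫ t in (0 : ℝ)..1, eulerKernel s (1 / 2 - s) (C ^ 2) t =
      2 * ∫ w in S..C, (((C - S) ^ 2 - (w - S * C / w) ^ 2 : ℝ) : ℂ) ^ (s - 1) := by
  have hsubst := intervalIntegral.integral_deriv_smul_comp_of_deriv_nonpos
    (g := eulerKernel s (1 / 2 - s) (C ^ 2))
    (f := fun w => C ^ 2 - w ^ 2) (f' := fun w => -(2 * w)) (a := S) (b := C) (by fun_prop)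
    (fun w _ => by simpa using (hasDerivAt_pow 2 w).const_sub (C ^ 2))
    (fun w hw => by
      have : 0 < w := pos_of_mem_uIcc hS (hS.trans_le hSC) (Set.Ioo_subset_Icc_self hw)
      linarith)
  have hleft : C ^ 2 - S ^ 2 = 1 := by linarith
  rw [sub_self, hleft, intervalIntegral.integral_symm 0 1] at hsubst
  rw [← neg_inj, ← hsubst, ← intervalIntegral.integral_const_mul, ← intervalIntegral.integral_neg]
  refine intervalIntegral.integral_congr fun w hw => ?_
  simp only [Function.comp_apply, neg_smul]
  rw [eulerKernel_comp_sub_sq hS hC (Set.uIcc_of_le hSC ▸ hw) s]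

lemma integral_eulerKernel_cosh_of_pos {θ : ℝ} (hθ : 0 < θ) (hs : 0 < s.re) :
    ∫ t in (0 : ℝ)..1, eulerKernel s (1 / 2 - s) (Real.cosh θ ^ 2) t =
      Complex.exp (-(2 * s - 1) * θ) * Complex.betaIntegral s (1 / 2) := by
  have hS : 0 < Real.sinh θ := Real.sinh_pos_iff.2 hθ
  have hE : Real.cosh θ - Real.sinh θ = Real.exp (-θ) := Real.cosh_sub_sinh θ
  obtain ⟨hint, hval⟩ :=
    intervalIntegrable_and_integral_sq_sub_sq_cpow (Real.exp_pos (-θ)) hs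
  rw [integral_eulerKernel_eq_integral_comp_sub_div hS (Real.sinh_lt_cosh θ).le (Real.cosh_sq θ),
    integral_comp_sub_mul_div (f := fun p : ℝ =>
      (((Real.cosh θ - Real.sinh θ) ^ 2 - p ^ 2 : ℝ) : ℂ) ^ (s - 1))
      (fun p => by simp only [neg_sq]) hS (Real.cosh_pos θ) (by rwa [hE]), hE, hval,
    Complex.ofReal_mul, Complex.mul_cpow_ofReal_nonneg zero_le_two (Real.exp_pos _).le,
    ofReal_cpow_eq_exp (Real.exp_pos _), Real.log_exp, ← two_cpow_mul_betaIntegral_self hs,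
    Complex.real_smul]
  push_cast
  ring_nf

lemma integral_eulerKernel_cosh (θ : ℝ) (hs : 0 < s.re) :
    ∫ t in Ioo (0 : ℝ) 1, eulerKernel s (1 / 2 - s) (Real.cosh θ ^ 2) t =
      Complex.exp (-(2 * s - 1) * |θ|) * Complex.betaIntegral s (1 / 2) := by
  rcases eq_or_ne θ 0 with rfl | hθ
  · simp [integral_eulerKernel_one]
  · rw [← integral_eulerKernel_cosh_of_pos (abs_pos.2 hθ) hs, Real.cosh_abs,
      intervalIntegral.integral_of_le zero_le_one, integral_Ioc_eq_integral_Ioo]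

end ReducedIntegral

section HorocycleIntegral

variable {s : ℂ} {b t : ℝ}

lemma betaIntegral_mul_betaIntegral_one_half (hs : 1 / 2 < s.re) :
    1 / (4 * (Real.pi : ℂ)) * (Complex.betaIntegral (s - 1 / 2) (1 / 2) / 2) *
      Complex.betaIntegral s (1 / 2) = 1 / (4 * (2 * s - 1)) := by
  have hre : 0 < (s - 1 / 2).re := by simpa using hs
  have hΓ : Complex.Gamma s ≠ 0 := Complex.Gamma_ne_zero_of_re_pos (by linarith)
  have hΓ' : Complex.Gamma (s - 1 / 2) ≠ 0 := Complex.Gamma_ne_zero_of_re_pos hre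
  have hne : s - 1 / 2 ≠ 0 := Complex.ne_zero_of_re_pos hre
  have hne' : 2 * s - 1 ≠ 0 := fun h => hne (by linear_combination h / 2)
  have hstep : Complex.Gamma (s + 1 / 2) = (2 * s - 1) / 2 * Complex.Gamma (s - 1 / 2) := by
    rw [show (2 * s - 1) / 2 = s - 1 / 2 by ring, ← Complex.Gamma_add_one _ hne]
    congr 1
    ring
  have hπ : (Real.pi : ℂ) ≠ 0 := Complex.ofReal_ne_zero.2 Real.pi_ne_zero
  have hsqrt : (Real.pi : ℂ) ^ (1 / 2 : ℂ) * (Real.pi : ℂ) ^ (1 / 2 : ℂ) = Real.pi := by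
    rw [← Complex.cpow_add _ _ hπ, add_halves, Complex.cpow_one]
  rw [Complex.betaIntegral_eq_Gamma_mul_div _ _ hre (by norm_num),
    Complex.betaIntegral_eq_Gamma_mul_div _ _ (by linarith) (by norm_num),
    Complex.Gamma_one_half_eq, hstep, sub_add_cancel]
  generalize Complex.Gamma (s - 1 / 2) = γ at hΓ'
  field_simp
  linear_combination hsqrt

lemma greenH_eq_integral_eulerKernel (s : ℂ) (σ : ℝ) :
    greenH s σ = 1 / (4 * (Real.pi : ℂ)) * ∫ t in Ioo (0 : ℝ) 1, eulerKernel s (-s) σ t :=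
  rfl

lemma norm_greenH_le {σ : ℝ} (s : ℂ) (hσ : 1 ≤ σ) : ‖greenH s σ‖ ≤ (greenH s.re σ).re := by
  have hre : greenH s.re σ =
      ((1 / (4 * Real.pi) * ∫ t in Ioo (0 : ℝ) 1, ‖eulerKernel s (-s) σ t‖ : ℝ) : ℂ) := by
    rw [greenH_eq_integral_eulerKernel, Complex.ofReal_mul, ← integral_complex_ofReal,
      setIntegral_congr_fun measurableSet_Ioo fun t ht => ofReal_norm_eulerKernel s (-s) hσ ht]
    push_cast [Complex.neg_re]
    rfl
  have hconst : ‖1 / (4 * (Real.pi : ℂ))‖ = 1 / (4 * Real.pi) := by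
    simp [abs_of_pos Real.pi_pos]
  rw [hre, Complex.ofReal_re, greenH_eq_integral_eulerKernel, norm_mul, hconst]
  gcongr
  exact norm_integral_le_integral_norm _

lemma eulerKernel_add_sq (s : ℂ) (b t v : ℝ) :
    eulerKernel s (-s) (b + v ^ 2) t =
      (t : ℂ) ^ (s - 1) * (1 - (t : ℂ)) ^ (s - 1) * ((b - t + v ^ 2 : ℝ) : ℂ) ^ (-s) := by
  rw [eulerKernel, ← Complex.ofReal_sub, add_sub_right_comm]

lemma integrableOn_eulerKernel_add_sq (hb : 1 ≤ b) (ht : t < 1) (hs : 1 / 2 < s.re) :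
    IntegrableOn (fun v => eulerKernel s (-s) (b + v ^ 2) t) (Ioi 0) := by
  simp only [eulerKernel_add_sq]
  exact (integrableOn_add_sq_cpow_neg (sub_pos.2 (ht.trans_le hb)) hs).const_mul _

lemma integral_eulerKernel_add_sq (s : ℂ) (hb : 1 ≤ b) (ht : t < 1) :
    ∫ v in Ioi (0 : ℝ), eulerKernel s (-s) (b + v ^ 2) t =
      eulerKernel s (1 / 2 - s) b t * (Complex.betaIntegral (s - 1 / 2) (1 / 2) / 2) := by
  simp only [eulerKernel_add_sq]
  rw [integral_const_mul, integral_add_sq_cpow_neg (sub_pos.2 (ht.trans_le hb)), eulerKernel,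
    Complex.ofReal_sub, ← mul_assoc]

lemma integral_norm_eulerKernel_add_sq (s : ℂ) (hb : 1 ≤ b) (ht : t ∈ Ioo (0 : ℝ) 1) :
    ∫ v in Ioi (0 : ℝ), ‖eulerKernel s (-s) (b + v ^ 2) t‖ =
      ((eulerKernel s.re (1 / 2 - s.re) b t *
        (Complex.betaIntegral (s.re - 1 / 2) (1 / 2) / 2)).re) := by
  rw [← integral_eulerKernel_add_sq _ hb ht.2, ← Complex.ofReal_re (∫ _ in _, _),
    ← integral_complex_ofReal]
  congr 1
  refine setIntegral_congr_fun measurableSet_Ioi fun v _ => ?_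
  rw [ofReal_norm_eulerKernel s (-s) (hb.trans (le_add_of_nonneg_right (sq_nonneg v))) ht,
    Complex.neg_re, Complex.ofReal_neg]

lemma integrable_eulerKernel_add_sq_prod (hb : 1 ≤ b) (hs : 1 / 2 < s.re) :
    Integrable (fun p : ℝ × ℝ => eulerKernel s (-s) (b + p.1 ^ 2) p.2)
      ((volume.restrict (Ioi 0)).prod (volume.restrict (Ioo 0 1))) := by
  have hmeas : Measurable fun p : ℝ × ℝ => eulerKernel s (-s) (b + p.1 ^ 2) p.2 :=
    (measurable_eulerKernel s (-s)).comp (f := fun p : ℝ × ℝ => (b + p.1 ^ 2, p.2)) (by fun_prop)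
  refine (integrable_prod_iff' hmeas.aestronglyMeasurable).2 ⟨?_, ?_⟩
  · exact (ae_restrict_iff' measurableSet_Ioo).2 <| .of_forall fun t ht =>
      integrableOn_eulerKernel_add_sq hb ht.2 hs
  · have hreduced := (integrableOn_eulerKernel (s := s.re) (w := 1 / 2 - s.re) hb
      (by simp; linarith) (by simp; linarith) (by simp)).mul_const
        (Complex.betaIntegral (s.re - 1 / 2) (1 / 2) / 2)
    exact IntegrableOn.congr_fun hreduced.re
      (fun t ht => (integral_norm_eulerKernel_add_sq s hb ht).symm) measurableSet_Ioo

lemma integrableOn_greenH_add_sq (hb : 1 ≤ b) (hs : 1 / 2 < s.re) :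
    IntegrableOn (fun v : ℝ => greenH s (b + v ^ 2)) (Ioi 0) :=
  (integrable_eulerKernel_add_sq_prod hb hs).integral_prod_left.const_mul _

lemma one_le_cosh_sq (θ : ℝ) : 1 ≤ Real.cosh θ ^ 2 := one_le_pow₀ (Real.one_le_cosh θ)

theorem integral_greenH_cosh_sq_add_sq (θ : ℝ) (hs : 1 / 2 < s.re) :
    ∫ v in Ioi (0 : ℝ), greenH s (Real.cosh θ ^ 2 + v ^ 2) =
      Complex.exp (-(2 * s - 1) * |θ|) / (4 * (2 * s - 1)) := by
  simp only [greenH_eq_integral_eulerKernel]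
  rw [integral_const_mul,
    integral_integral_swap (integrable_eulerKernel_add_sq_prod (one_le_cosh_sq θ) hs),
    setIntegral_congr_fun measurableSet_Ioo fun t ht =>
      integral_eulerKernel_add_sq s (one_le_cosh_sq θ) ht.2,
    integral_mul_const, integral_eulerKernel_cosh θ (one_half_pos.trans hs),
    div_eq_mul_one_div (Complex.exp _), ← betaIntegral_mul_betaIntegral_one_half hs]
  ring

lemma integral_norm_greenH_cosh_sq_add_sq_le (θ : ℝ) (hs : 1 / 2 < s.re) :
    ∫ v in Ioi (0 : ℝ), ‖greenH s (Real.cosh θ ^ 2 + v ^ 2)‖ ≤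
      Real.exp (-(2 * s.re - 1) * |θ|) / (4 * (2 * s.re - 1)) := by
  have hre : 1 / 2 < (s.re : ℂ).re := by simpa using hs
  have hint := integrableOn_greenH_add_sq (one_le_cosh_sq θ) hre
  calc ∫ v in Ioi (0 : ℝ), ‖greenH s (Real.cosh θ ^ 2 + v ^ 2)‖
      ≤ ∫ v in Ioi (0 : ℝ), (greenH s.re (Real.cosh θ ^ 2 + v ^ 2)).re :=
        integral_mono (integrableOn_greenH_add_sq (one_le_cosh_sq θ) hs).norm hint.re fun v =>
          norm_greenH_le s ((one_le_cosh_sq θ).trans (le_add_of_nonneg_right (sq_nonneg v)))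
    _ = (∫ v in Ioi (0 : ℝ), greenH s.re (Real.cosh θ ^ 2 + v ^ 2)).re := integral_re hint
    _ = Real.exp (-(2 * s.re - 1) * |θ|) / (4 * (2 * s.re - 1)) := by
        rw [integral_greenH_cosh_sq_add_sq θ hre]
        norm_cast

section Scaling

variable {a : ℝ} (θ : ℝ)

lemma integrableOn_greenH_cosh_sq_add_mul_sq (ha : 0 < a) (hs : 1 / 2 < s.re) :
    IntegrableOn (fun x : ℝ => greenH s (Real.cosh θ ^ 2 + (a * x) ^ 2)) (Ioi 0) :=
  (integrableOn_Ioi_comp_mul_left_iff (fun v => greenH s (Real.cosh θ ^ 2 + v ^ 2)) 0 ha).2 <| by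
    simpa only [mul_zero] using integrableOn_greenH_add_sq (one_le_cosh_sq θ) hs

lemma integral_greenH_cosh_sq_add_mul_sq (ha : 0 < a) (hs : 1 / 2 < s.re) :
    ∫ x in Ioi (0 : ℝ), greenH s (Real.cosh θ ^ 2 + (a * x) ^ 2) =
      (a : ℂ)⁻¹ * (Complex.exp (-(2 * s - 1) * |θ|) / (4 * (2 * s - 1))) := by
  rw [integral_comp_mul_left_Ioi (fun v => greenH s (Real.cosh θ ^ 2 + v ^ 2)) 0 ha, mul_zero,
    integral_greenH_cosh_sq_add_sq θ hs, Complex.real_smul, Complex.ofReal_inv]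

lemma integral_norm_greenH_cosh_sq_add_mul_sq_le (ha : 0 < a) (hs : 1 / 2 < s.re) :
    ∫ x in Ioi (0 : ℝ), ‖greenH s (Real.cosh θ ^ 2 + (a * x) ^ 2)‖ ≤
      a⁻¹ * (1 / (4 * (2 * s.re - 1))) := by
  have hpos : 0 < 2 * s.re - 1 := by linarith
  rw [integral_comp_mul_left_Ioi (fun v => ‖greenH s (Real.cosh θ ^ 2 + v ^ 2)‖) 0 ha, mul_zero,
    smul_eq_mul]
  gcongr
  refine (integral_norm_greenH_cosh_sq_add_sq_le θ hs).trans ?_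
  gcongr
  exact Real.exp_le_one_iff.2 (mul_nonpos_of_nonpos_of_nonneg (by linarith) (abs_nonneg θ))

end Scaling

end HorocycleIntegral

section LambertSeries

lemma summable_mul_pow_pow_succ {𝕜 : Type*} [NormedField 𝕜] [CompleteSpace 𝕜] {q r : 𝕜}
    (hq : ‖q‖ < 1) (hr : ‖r‖ < 1) : Summable fun p : ℕ × ℕ => (q * r ^ p.1) ^ (p.2 + 1) := by
  have hgeom := (summable_geometric_of_lt_one (norm_nonneg r) hr).mul_of_nonneg
    (summable_geometric_of_lt_one (norm_nonneg q) hq) (fun _ => by positivity)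
    (fun _ => by positivity)
  refine hgeom.of_norm_bounded fun p => ?_
  rw [norm_pow, norm_mul, norm_pow, mul_pow, ← pow_mul, mul_comm]
  exact mul_le_mul
    (pow_le_pow_of_le_one (norm_nonneg r) hr.le (Nat.le_mul_of_pos_right _ p.2.succ_pos))
    (pow_le_pow_of_le_one (norm_nonneg q) hq.le p.2.le_succ) (by positivity) (by positivity)

theorem hasSum_pow_div_one_sub_pow {𝕜 : Type*} [NormedField 𝕜] [CompleteSpace 𝕜] {q r : 𝕜}
    (hq : ‖q‖ < 1) (hr : ‖r‖ < 1) :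
    HasSum (fun n : ℕ => q ^ (n + 1) / (1 - r ^ (n + 1)))
      (∑' k : ℕ, q * r ^ k / (1 - q * r ^ k)) := by
  have hdouble := (summable_mul_pow_pow_succ hq hr).hasSum
  have hrow (k : ℕ) : HasSum (fun n => (q * r ^ k) ^ (n + 1)) (q * r ^ k / (1 - q * r ^ k)) := by
    have hlt : ‖q * r ^ k‖ < 1 := by
      rw [norm_mul, norm_pow]
      exact mul_lt_one_of_nonneg_of_lt_one_left (norm_nonneg q) hq
        (pow_le_one₀ (norm_nonneg r) hr.le)
    simpa only [pow_succ', div_eq_mul_inv] using (hasSum_geometric_of_norm_lt_one hlt).mul_left _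
  have hcol (n : ℕ) :
      HasSum (fun k => (q * r ^ k) ^ (n + 1)) (q ^ (n + 1) / (1 - r ^ (n + 1))) := by
    have hlt : ‖r ^ (n + 1)‖ < 1 := by
      rw [norm_pow]
      exact pow_lt_one₀ (norm_nonneg r) hr n.succ_ne_zero
    simpa only [mul_pow, pow_right_comm r, div_eq_mul_inv] using
      (hasSum_geometric_of_norm_lt_one hlt).mul_left (q ^ (n + 1))
  rw [(hdouble.prod_fiberwise hrow).tsum_eq]
  exact ((Equiv.prodComm ℕ ℕ).hasSum_iff.2 hdouble).prod_fiberwise hcol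

/-- The Lambert series `∑ q_k / (1 - q_k)`, `q_k = e^{-(s+2k+1)ℓ}`: the logarithmic derivative of
the funnel zeta function `Z_F` is `-ℓ/4 + 2ℓ` times this series. -/
noncomputable def funnelLambertSeries (ℓ : ℝ) (s : ℂ) : ℂ :=
  ∑' k : ℕ, Complex.exp (-(s + 2 * k + 1) * ℓ) / (1 - Complex.exp (-(s + 2 * k + 1) * ℓ))

variable {ℓ : ℝ} {s : ℂ}

lemma hasSum_funnelLambertSeries (hℓ : 0 < ℓ) (hs : -1 < s.re) :
    HasSum (fun n : ℕ => Complex.exp (-(s + 1) * ℓ) ^ (n + 1) /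
      (1 - Complex.exp (-2 * ℓ) ^ (n + 1))) (funnelLambertSeries ℓ s) := by
  have hq : ‖Complex.exp (-(s + 1) * ℓ)‖ < 1 := by
    rw [Complex.norm_exp, Real.exp_lt_one_iff, Complex.re_mul_ofReal]
    exact mul_neg_of_neg_of_pos (by simpa using hs) hℓ
  have hr : ‖Complex.exp (-2 * ℓ)‖ < 1 := by
    rw [Complex.norm_exp, Real.exp_lt_one_iff, Complex.re_mul_ofReal]
    exact mul_neg_of_neg_of_pos (by simp) hℓ
  have hterm (k : ℕ) : Complex.exp (-(s + 2 * k + 1) * ℓ) =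
      Complex.exp (-(s + 1) * ℓ) * Complex.exp (-2 * ℓ) ^ k := by
    rw [← Complex.exp_nat_mul, ← Complex.exp_add]
    congr 1
    ring
  simpa only [funnelLambertSeries, hterm] using hasSum_pow_div_one_sub_pow hq hr

end LambertSeries

section HyperbolicSums

lemma inv_sinh_sub_inv_cosh {θ : ℝ} (hθ : 0 < θ) :
    (Real.sinh θ)⁻¹ - (Real.cosh θ)⁻¹ = 4 * Real.exp (-3 * θ) / (1 - Real.exp (-4 * θ)) := by
  have hsinh : Real.sinh θ ≠ 0 := (Real.sinh_pos_iff.2 hθ).ne'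
  have hcosh : Real.cosh θ ≠ 0 := (Real.cosh_pos θ).ne'
  have hdenom : 1 - Real.exp (-4 * θ) = 4 * Real.exp (-2 * θ) * (Real.sinh θ * Real.cosh θ) := by
    have hinv : Real.exp θ * Real.exp (-θ) = 1 := by
      rw [← Real.exp_add, add_neg_cancel, Real.exp_zero]
    rw [show -4 * θ = (4 : ℕ) * -θ by push_cast; ring,
      show -2 * θ = (2 : ℕ) * -θ by push_cast; ring,
      Real.exp_nat_mul, Real.exp_nat_mul, Real.sinh_eq, Real.cosh_eq]
    linear_combination -(1 + Real.exp θ * Real.exp (-θ)) * hinv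
  have hnum : Real.exp (-3 * θ) = Real.exp (-2 * θ) * (Real.cosh θ - Real.sinh θ) := by
    rw [Real.cosh_sub_sinh, ← Real.exp_add]
    ring_nf
  rw [hdenom, hnum]
  field_simp

lemma summable_exp_neg_abs {c : ℝ} (hc : 0 < c) :
    Summable fun m : ℤ => Real.exp (-|(m : ℝ) * c|) := by
  have hnat : Summable fun n : ℕ => Real.exp (-|(n : ℝ) * c|) := by
    refine (Real.summable_exp_nat_mul_iff.2 (neg_neg_of_pos hc)).congr fun n => ?_
    rw [abs_of_nonneg (by positivity), mul_neg]
  exact .of_nat_of_neg (by simpa using hnat) (by simpa using hnat)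

lemma inv_cosh_le (θ : ℝ) : (Real.cosh θ)⁻¹ ≤ 2 * Real.exp (-|θ|) := by
  rw [← Real.cosh_abs, Real.cosh_eq, inv_div, div_eq_mul_inv, Real.exp_neg]
  gcongr
  exact le_add_of_nonneg_right (by positivity)

variable {ℓ : ℝ} {s : ℂ}

lemma summable_inv_cosh (hℓ : 0 < ℓ) : Summable fun m : ℤ => (Real.cosh (m * ℓ / 2))⁻¹ := by
  refine .of_nonneg_of_le (fun _ => by positivity) (fun m => inv_cosh_le _) ?_
  simpa only [mul_div_assoc] using (summable_exp_neg_abs (half_pos hℓ)).mul_left 2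

/-- The contribution of a direct image and of the corresponding reflected image, at displacement
`2θ`, to the regularized resolvent trace, up to normalization. -/
noncomputable def imagePairTerm (s : ℂ) (θ : ℝ) : ℂ :=
  Complex.exp (-(2 * s - 1) * |θ|) * ((|Real.sinh θ|⁻¹ - (Real.cosh θ)⁻¹ : ℝ) : ℂ)

lemma imagePairTerm_neg (s : ℂ) (θ : ℝ) : imagePairTerm s (-θ) = imagePairTerm s θ := by
  simp only [imagePairTerm, abs_neg, Real.sinh_neg, Real.cosh_neg]

-- The direct image at displacement `0` contributes `0⁻¹ = 0`, in accordance with its removal.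
lemma imagePairTerm_zero (s : ℂ) : imagePairTerm s 0 = -1 := by simp [imagePairTerm]

lemma imagePairTerm_of_pos (s : ℂ) {θ : ℝ} (hθ : 0 < θ) :
    imagePairTerm s θ =
      4 * (Complex.exp (-(2 * s + 2) * θ) / (1 - Complex.exp (-4 * θ))) := by
  have hexp : Complex.exp (-(2 * s + 2) * θ) =
      Complex.exp (-(2 * s - 1) * θ) * Complex.exp (-3 * θ) := by
    rw [← Complex.exp_add]
    ring_nf
  rw [imagePairTerm, abs_of_pos hθ, abs_of_pos (Real.sinh_pos_iff.2 hθ), inv_sinh_sub_inv_cosh hθ,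
    hexp]
  push_cast
  ring

theorem hasSum_imagePairTerm (hℓ : 0 < ℓ) (hs : -1 < s.re) :
    HasSum (fun m : ℤ => imagePairTerm s (m * ℓ / 2)) (-1 + 8 * funnelLambertSeries ℓ s) := by
  have hsucc : HasSum (fun n : ℕ => imagePairTerm s ((n + 1) * ℓ / 2))
      (4 * funnelLambertSeries ℓ s) := by
    refine ((hasSum_funnelLambertSeries hℓ hs).mul_left 4).congr_fun fun n => ?_
    rw [imagePairTerm_of_pos s (by positivity), ← Complex.exp_nat_mul, ← Complex.exp_nat_mul]
    push_cast
    ring_nf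
  have hneg (n : ℕ) : imagePairTerm s (-(n + 1) * ℓ / 2) = imagePairTerm s ((n + 1) * ℓ / 2) := by
    rw [neg_mul, neg_div, imagePairTerm_neg]
  convert HasSum.of_add_one_of_neg_add_one (f := fun m : ℤ => imagePairTerm s (m * ℓ / 2))
    (by push_cast; exact hsucc) (by push_cast; simpa only [hneg] using hsucc) using 1
  rw [Int.cast_zero, zero_mul, zero_div, imagePairTerm_zero]
  ring

-- At `s = 1/2` the image pair terms are `1 / |sinh| - 1 / cosh`.
lemma summable_inv_abs_sinh (hℓ : 0 < ℓ) :
    Summable fun m : ℤ => |Real.sinh (m * ℓ / 2)|⁻¹ := by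
  have hdiff : Summable fun m : ℤ => |Real.sinh (m * ℓ / 2)|⁻¹ - (Real.cosh (m * ℓ / 2))⁻¹ := by
    have := (hasSum_imagePairTerm (s := 1 / 2) hℓ (by norm_num)).summable
    simpa only [imagePairTerm, mul_one_div_cancel (two_ne_zero' ℂ), sub_self, neg_zero, zero_mul,
      Complex.exp_zero, one_mul, Complex.summable_ofReal] using this
  simpa only [sub_add_cancel] using hdiff.add (summable_inv_cosh hℓ)

end HyperbolicSums

section TsumIntegrable

lemma integrable_tsum_of_summable_integral_norm {α ι E : Type*} [Countable ι] [MeasurableSpace α]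
    {μ : Measure α} [NormedAddCommGroup E] [CompleteSpace E] {F : ι → α → E}
    (hF : ∀ i, Integrable (F i) μ) (hsum : Summable fun i => ∫ a, ‖F i a‖ ∂μ) :
    Integrable (fun a => ∑' i, F i a) μ := by
  have hnorm : Summable fun i => ‖(hF i).toL1 (F i)‖ := by
    simpa only [L1.norm_of_fun_eq_integral_norm] using hsum
  have hae := Lp.coeFn_tsum (f := fun i => (hF i).toL1 (F i))
    (tsum_enorm_ne_top_iff_summable_norm.2 hnorm)
  refine (L1.integrable_coeFn (∑' i, (hF i).toL1 (F i))).congr ?_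
  filter_upwards [hae, ae_all_iff.2 fun i => (hF i).coeFn_toL1] with a htsum hterm
  simp only [htsum, hterm]

end TsumIntegrable

section ImageSums

variable {ι : Type*} {a : ι → ℝ} {y : ℝ} {s : ℂ} (θ : ι → ℝ)

lemma summable_integral_norm_greenH (ha : ∀ i, 0 < a i) (hsum : Summable fun i => (a i)⁻¹)
    (hy : 0 < y) (hs : 1 / 2 < s.re) :
    Summable fun i =>
      ∫ x in Ioi (0 : ℝ), ‖greenH s (Real.cosh (θ i) ^ 2 + (a i / y * x) ^ 2)‖ := by
  refine .of_nonneg_of_le (fun _ => integral_nonneg fun _ => norm_nonneg _)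
    (fun i => integral_norm_greenH_cosh_sq_add_mul_sq_le (θ i) (div_pos (ha i) hy) hs) ?_
  simpa only [inv_div, div_eq_mul_inv y] using (hsum.mul_left y).mul_right _

variable [Countable ι]

lemma integrableOn_tsum_greenH (ha : ∀ i, 0 < a i) (hsum : Summable fun i => (a i)⁻¹)
    (hy : 0 < y) (hs : 1 / 2 < s.re) :
    IntegrableOn (fun x => ∑' i, greenH s (Real.cosh (θ i) ^ 2 + (a i / y * x) ^ 2)) (Ioi 0) :=
  integrable_tsum_of_summable_integral_norm
    (fun i => integrableOn_greenH_cosh_sq_add_mul_sq (θ i) (div_pos (ha i) hy) hs)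
    (summable_integral_norm_greenH θ ha hsum hy hs)

lemma hasSum_integral_tsum_greenH (ha : ∀ i, 0 < a i) (hsum : Summable fun i => (a i)⁻¹)
    (hy : 0 < y) (hs : 1 / 2 < s.re) :
    HasSum (fun i => y / (4 * (2 * s - 1)) * (Complex.exp (-(2 * s - 1) * |θ i|) * (a i : ℂ)⁻¹))
      (∫ x in Ioi (0 : ℝ), ∑' i, greenH s (Real.cosh (θ i) ^ 2 + (a i / y * x) ^ 2)) := by
  refine (hasSum_integral_of_summable_integral_norm
    (fun i => integrableOn_greenH_cosh_sq_add_mul_sq (θ i) (div_pos (ha i) hy) hs)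
    (summable_integral_norm_greenH θ ha hsum hy hs)).congr_fun fun i => ?_
  rw [integral_greenH_cosh_sq_add_mul_sq (θ i) (div_pos (ha i) hy) hs, Complex.ofReal_div, inv_div]
  ring

end ImageSums

section FunnelKernel

variable {y : ℝ}

lemma pairInvariant_translate (u x : ℝ) (hy : y ≠ 0) :
    ((x - Real.exp u * x) ^ 2 + (y + Real.exp u * y) ^ 2) / (4 * Real.exp u * y ^ 2) =
      Real.cosh (u / 2) ^ 2 + (|Real.sinh (u / 2)| / y * x) ^ 2 := by
  have hexp : Real.exp u = Real.exp (u / 2) ^ 2 := by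
    rw [← Real.exp_nat_mul, Nat.cast_two, mul_div_cancel₀ u two_ne_zero]
  rw [mul_pow, div_pow, sq_abs, Real.cosh_eq, Real.sinh_eq, hexp, Real.exp_neg]
  field_simp
  ring

lemma pairInvariant_reflect (u x : ℝ) (hy : y ≠ 0) :
    ((x + Real.exp u * x) ^ 2 + (y + Real.exp u * y) ^ 2) / (4 * Real.exp u * y ^ 2) =
      Real.cosh (u / 2) ^ 2 + (Real.cosh (u / 2) / y * x) ^ 2 := by
  have hexp : Real.exp u = Real.exp (u / 2) ^ 2 := by
    rw [← Real.exp_nat_mul, Nat.cast_two, mul_div_cancel₀ u two_ne_zero]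
  rw [Real.cosh_eq, hexp, Real.exp_neg]
  field_simp
  ring

/-- The Dirichlet resolvent kernel of the funnel of boundary length `ℓ` at the diagonal point
`x + iy`, written by the method of images, with the free term `m = 0` removed. -/
noncomputable def regularizedFunnelKernel (ℓ : ℝ) (s : ℂ) (x y : ℝ) : ℂ :=
  (∑' m : {m : ℤ // m ≠ 0},
    greenH s (((x - Real.exp (m * ℓ) * x) ^ 2 + (y + Real.exp (m * ℓ) * y) ^ 2) /
      (4 * Real.exp (m * ℓ) * y ^ 2))) -
  ∑' m : ℤ,
    greenH s (((x + Real.exp (m * ℓ) * x) ^ 2 + (y + Real.exp (m * ℓ) * y) ^ 2) /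
      (4 * Real.exp (m * ℓ) * y ^ 2))

variable {ℓ : ℝ} {s : ℂ}

lemma abs_sinh_pos (hℓ : 0 < ℓ) (m : {m : ℤ // m ≠ 0}) : 0 < |Real.sinh (m * ℓ / 2)| := by
  have hm : (m : ℝ) ≠ 0 := Int.cast_ne_zero.2 m.2
  exact abs_pos.2 (Real.sinh_eq_zero.not.2 (by positivity))

lemma hasSum_integral_translates (hℓ : 0 < ℓ) (hs : 1 / 2 < s.re) (hy : 0 < y) :
    HasSum (fun m : ℤ => y / (4 * (2 * s - 1)) *
        (Complex.exp (-(2 * s - 1) * |(m * ℓ / 2 : ℝ)|) * ((|Real.sinh (m * ℓ / 2)| : ℝ) : ℂ)⁻¹))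
      (∫ x in Ioi (0 : ℝ), ∑' m : {m : ℤ // m ≠ 0},
        greenH s (Real.cosh (m * ℓ / 2) ^ 2 + (|Real.sinh (m * ℓ / 2)| / y * x) ^ 2)) := by
  refine (hasSum_subtype_iff_of_support_subset fun m hm => ?_).1
    (hasSum_integral_tsum_greenH (fun m : {m : ℤ // m ≠ 0} => (m * ℓ / 2 : ℝ))
      (abs_sinh_pos hℓ) ((summable_inv_abs_sinh hℓ).subtype {m | m ≠ 0}) hy hs)
  contrapose! hm
  simp [not_not.1 hm]

lemma integral_regularizedFunnelKernel (hℓ : 0 < ℓ) (hs : 1 / 2 < s.re) (hy : 0 < y) :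
    ∫ x in Ioi (0 : ℝ), regularizedFunnelKernel ℓ s x y =
      y / (4 * (2 * s - 1)) * (-1 + 8 * funnelLambertSeries ℓ s) := by
  have hcosh (m : ℤ) : 0 < Real.cosh (m * ℓ / 2) := Real.cosh_pos _
  simp only [regularizedFunnelKernel, pairInvariant_translate _ _ hy.ne',
    pairInvariant_reflect _ _ hy.ne']
  rw [integral_sub
    (integrableOn_tsum_greenH _ (abs_sinh_pos hℓ) ((summable_inv_abs_sinh hℓ).subtype _) hy hs)
    (integrableOn_tsum_greenH _ hcosh (summable_inv_cosh hℓ) hy hs)]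
  refine ((hasSum_integral_translates hℓ hs hy).sub
    (hasSum_integral_tsum_greenH _ hcosh (summable_inv_cosh hℓ) hy hs)).unique
    (((hasSum_imagePairTerm hℓ (by linarith)).mul_left _).congr_fun fun m => ?_)
  rw [imagePairTerm, ← mul_sub, ← mul_sub]
  push_cast
  rfl

end FunnelKernel

/-- Proposition 2.3 of the paper: `Φ_F(s) = Z_F'(s)/Z_F(s)` for the funnel of boundary
length `ℓ`, written out via the method of images.  For `ℓ > 0` and `Re s > 1/2`,
`(2s-1) ∫₁^{e^ℓ} ∫₀^∞ [ ∑_{m≠0} g_s(((x - e^{mℓ}x)² + (y + e^{mℓ}y)²)/(4e^{mℓ}y²))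
  - ∑_{m∈ℤ} g_s(((x + e^{mℓ}x)² + (y + e^{mℓ}y)²)/(4e^{mℓ}y²)) ] y⁻² dx dy
  = -ℓ/4 + ∑_{k=0}^∞ 2ℓ e^{-(s+2k+1)ℓ}/(1 - e^{-(s+2k+1)ℓ})`. -/
theorem funnel_regularized_trace (ℓ : ℝ) (hl : 0 < ℓ) (s : ℂ) (hs : 1 / 2 < s.re) :
    (2 * s - 1) * ∫ y in Set.Ioo (1:ℝ) (Real.exp ℓ), ∫ x in Set.Ioi (0:ℝ),
        ((∑' m : {m : ℤ // m ≠ 0},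
            greenH s (((x - Real.exp ((m : ℤ) * ℓ) * x) ^ 2
              + (y + Real.exp ((m : ℤ) * ℓ) * y) ^ 2) / (4 * Real.exp ((m : ℤ) * ℓ) * y ^ 2)))
          - ∑' m : ℤ,
            greenH s (((x + Real.exp (m * ℓ) * x) ^ 2
              + (y + Real.exp (m * ℓ) * y) ^ 2) / (4 * Real.exp (m * ℓ) * y ^ 2)))
          / (y : ℂ) ^ 2 =
      -(ℓ : ℂ) / 4 + ∑' k : ℕ, 2 * (ℓ : ℂ) * Complex.exp (-(s + 2 * k + 1) * ℓ)
          / (1 - Complex.exp (-(s + 2 * k + 1) * ℓ)) := by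
  change (2 * s - 1) * ∫ y in Ioo 1 (Real.exp ℓ), ∫ x in Ioi (0 : ℝ),
    regularizedFunnelKernel ℓ s x y / (y : ℂ) ^ 2 = _
  have hhorizontal {y : ℝ} (hy : y ∈ Ioo 1 (Real.exp ℓ)) :
      ∫ x in Ioi (0 : ℝ), regularizedFunnelKernel ℓ s x y / (y : ℂ) ^ 2 =
        ((y⁻¹ : ℝ) : ℂ) * ((-1 + 8 * funnelLambertSeries ℓ s) / (4 * (2 * s - 1))) := by
    have hy0 : 0 < y := one_pos.trans hy.1
    rw [integral_div, integral_regularizedFunnelKernel hl hs hy0, Complex.ofReal_inv]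
    field_simp
  have hvertical : ∫ y in Ioo 1 (Real.exp ℓ), y⁻¹ = ℓ := by
    rw [← integral_Ioc_eq_integral_Ioo,
      ← intervalIntegral.integral_of_le (Real.one_le_exp_iff.2 hl.le),
      integral_inv_of_pos one_pos (Real.exp_pos ℓ), div_one, Real.log_exp]
  have hne : 2 * s - 1 ≠ 0 := fun h => by
    have hre : 2 * s.re - 1 = 0 := by simpa using congrArg Complex.re h
    linarith
  simp only [mul_div_assoc, tsum_mul_left]
  rw [setIntegral_congr_fun measurableSet_Ioo fun y hy => hhorizontal hy, integral_mul_const,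
    integral_complex_ofReal, hvertical, ← funnelLambertSeries]
  field_simp
  ring
end

section
/- Let s be a complex number with Re(s) > 1/2 and let κ > 0 be real. Then (2s−1) ∫_{−∞}^{∞} g_s( (1 + t²) (1 + κ)²/(4κ) ) dt = max(κ, κ^{-1})^{1/2 − s} / (κ^{1/2} + κ^{-1/2}). -/
open MeasureTheory

/-! Put `σ = (1 + κ)² / (4κ)`. Rescaling `t` turns the argument of `g_s` into `σ + t²`, and by
Fubini the integral over `t` comes down to `∫₀¹ (u(1 - u))^(s-1) (σ - u)^(1/2-s) du`. With
`u = (1 + c) / 2` and `x = min κ κ⁻¹`, so that also `σ = (1 + x)² / (4x)`, this is a power of `x`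
times `∫ (1 - c²)^(s-1) (1 - 2xc + x²)^(1/2-s) dc` over `[-1, 1]`. The latter does not depend on
`x`: parametrising the unit sphere by directions `w` seen from the interior point `x` instead of
the centre turns it into `∫ (1 - w²)^(s-1) (1 - f w) dw` with `f` odd. What is left is a product
of two Beta values, evaluated by the functional equation of `Γ`. -/

open Set

lemma ofReal_sqrt_eq_cpow {a : ℝ} (ha : 0 ≤ a) : ((√a : ℝ) : ℂ) = (a : ℂ) ^ (1 / 2 : ℂ) := by
  rw [Real.sqrt_eq_rpow, Complex.ofReal_cpow ha]
  norm_num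

lemma integral_neg_self_eq_zero_of_odd {E : Type*} [NormedAddCommGroup E] [NormedSpace ℝ E]
    {f : ℝ → E} (hf : f.Odd) (a : ℝ) : ∫ x in -a..a, f x = 0 := by
  have h := intervalIntegral.integral_comp_neg (a := -a) (b := a) f
  simp only [hf _, intervalIntegral.integral_neg, neg_neg] at h
  have : IsAddTorsionFree E := .of_isTorsionFree ℝ E
  exact self_eq_neg.mp h.symm

lemma betaIntegral_one_half_right {s : ℂ} (hs : 0 < s.re) :
    Complex.betaIntegral s (1 / 2) =
      Complex.Gamma s * (√Real.pi : ℝ) / Complex.Gamma (s + 1 / 2) := by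
  rw [Complex.betaIntegral_eq_Gamma_mul_div _ _ hs (by norm_num), Complex.Gamma_one_half_eq,
    ofReal_sqrt_eq_cpow Real.pi_pos.le]

lemma betaIntegral_one_half_right_ne_zero {s : ℂ} (hs : 0 < s.re) :
    Complex.betaIntegral s (1 / 2) ≠ 0 := by
  have hs' : 0 < (s + 1 / 2).re := by norm_num; linarith
  rw [betaIntegral_one_half_right hs]
  exact div_ne_zero (mul_ne_zero (Complex.Gamma_ne_zero_of_re_pos hs)
    (Complex.ofReal_ne_zero.mpr (by positivity))) (Complex.Gamma_ne_zero_of_re_pos hs')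

lemma betaIntegral_self {s : ℂ} (hs : 0 < s.re) :
    Complex.betaIntegral s s = 2 ^ (1 - 2 * s) * Complex.betaIntegral s (1 / 2) := by
  have h₁ : Complex.Gamma (s + 1 / 2) ≠ 0 :=
    Complex.Gamma_ne_zero_of_re_pos (by norm_num; linarith)
  have h₂ : Complex.Gamma (2 * s) ≠ 0 := Complex.Gamma_ne_zero_of_re_pos (by simpa using hs)
  rw [betaIntegral_one_half_right hs, Complex.betaIntegral_eq_Gamma_mul_div _ _ hs hs, ← two_mul,
    mul_div_assoc', div_eq_div_iff h₂ h₁]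
  linear_combination Complex.Gamma s * Complex.Gamma_mul_Gamma_add_half s

lemma mul_betaIntegral_mul_betaIntegral_add_half {s : ℂ} (hs : 0 < s.re) :
    s * (Complex.betaIntegral s (1 / 2) * Complex.betaIntegral (s + 1 / 2) (1 / 2)) =
      Real.pi := by
  have hs' : 0 < (s + 1 / 2).re := by norm_num; linarith
  have hs₀ : s ≠ 0 := fun h ↦ by simp [h] at hs
  have hΓ := Complex.Gamma_ne_zero_of_re_pos hs
  have hΓ' := Complex.Gamma_ne_zero_of_re_pos hs'
  have hπ : ((√Real.pi : ℝ) : ℂ) ^ 2 = Real.pi := by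
    rw [← Complex.ofReal_pow, Real.sq_sqrt Real.pi_pos.le]
  rw [betaIntegral_one_half_right hs, betaIntegral_one_half_right hs', add_assoc, add_halves,
    Complex.Gamma_add_one s hs₀, ← hπ]
  generalize Complex.Gamma (s + 1 / 2) = Γ at *
  field_simp

lemma two_cpow_neg_two_mul_mul_four_cpow (z : ℂ) :
    (2 : ℂ) ^ (-2 * z) * ((4 : ℝ) : ℂ) ^ z = 1 := by
  rw [show ((4 : ℝ) : ℂ) = ((2 : ℕ) : ℂ) ^ 2 by norm_num, ← Complex.natCast_cpow_natCast_mul,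
    Nat.cast_ofNat, ← Complex.cpow_add _ _ two_ne_zero, neg_mul, neg_add_cancel, Complex.cpow_zero]

lemma cpow_mul_one_sub_cpow {u : ℝ} (hu : u ∈ Icc 0 1) (z : ℂ) :
    (u : ℂ) ^ z * (1 - (u : ℂ)) ^ z = 2 ^ (-2 * z) * ((1 - (2 * u - 1) ^ 2 : ℝ) : ℂ) ^ z := by
  have h1u : 0 ≤ 1 - u := sub_nonneg.mpr hu.2
  rw [show 1 - (2 * u - 1) ^ 2 = 4 * (u * (1 - u)) by ring, Complex.ofReal_mul,
    Complex.mul_cpow_ofReal_nonneg zero_le_four (mul_nonneg hu.1 h1u), ← mul_assoc,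
    two_cpow_neg_two_mul_mul_four_cpow, one_mul, Complex.ofReal_mul,
    Complex.mul_cpow_ofReal_nonneg hu.1 h1u, Complex.ofReal_sub, Complex.ofReal_one]

lemma integral_cpow_mul_one_sub_cpow_mul_comp (z : ℂ) (f : ℝ → ℂ) :
    ∫ u in (0 : ℝ)..1, (u : ℂ) ^ z * (1 - (u : ℂ)) ^ z * f (2 * u - 1) =
      2 ^ (-2 * z - 1) * ∫ c in (-1 : ℝ)..1, ((1 - c ^ 2 : ℝ) : ℂ) ^ z * f c := by
  have hweight : ∀ u ∈ uIcc (0 : ℝ) 1, (u : ℂ) ^ z * (1 - (u : ℂ)) ^ z * f (2 * u - 1) =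
      2 ^ (-2 * z) * (((1 - (2 * u - 1) ^ 2 : ℝ) : ℂ) ^ z * f (2 * u - 1)) := fun u hu ↦ by
    rw [cpow_mul_one_sub_cpow (uIcc_of_le (zero_le_one' ℝ) ▸ hu), mul_assoc]
  rw [intervalIntegral.integral_congr hweight, intervalIntegral.integral_const_mul,
    intervalIntegral.integral_comp_mul_sub (fun c ↦ ((1 - c ^ 2 : ℝ) : ℂ) ^ z * f c) two_ne_zero,
    Complex.real_smul, Complex.cpow_sub _ _ two_ne_zero, Complex.cpow_one]
  norm_num [div_eq_mul_inv, mul_assoc]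

lemma integral_one_sub_sq_cpow {s : ℂ} (hs : 0 < s.re) :
    ∫ c in (-1 : ℝ)..1, ((1 - c ^ 2 : ℝ) : ℂ) ^ (s - 1) = Complex.betaIntegral s (1 / 2) := by
  have h := integral_cpow_mul_one_sub_cpow_mul_comp (s - 1) (fun _ ↦ 1)
  simp only [mul_one] at h
  rw [← Complex.betaIntegral, betaIntegral_self hs, show -2 * (s - 1) - 1 = 1 - 2 * s by ring] at h
  exact (mul_left_cancel₀ (Complex.cpow_ne_zero_iff.mpr (.inl two_ne_zero)) h).symm

lemma intervalIntegrable_one_sub_sq_cpow {s : ℂ} (hs : 0 < s.re) :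
    IntervalIntegrable (fun c : ℝ ↦ ((1 - c ^ 2 : ℝ) : ℂ) ^ (s - 1)) volume (-1) 1 :=
  intervalIntegral.intervalIntegrable_of_integral_ne_zero <| by
    rw [integral_one_sub_sq_cpow hs]
    exact betaIntegral_one_half_right_ne_zero hs

lemma hasDerivAt_div_sqrt_one_add_sq (t : ℝ) :
    HasDerivAt (fun t : ℝ ↦ t / √(1 + t ^ 2)) ((1 + t ^ 2) * √(1 + t ^ 2))⁻¹ t := by
  have hq : 0 < 1 + t ^ 2 := by positivity
  have hsq := Real.sq_sqrt hq.le
  have hsqrt := Real.sqrt_pos.mpr hq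
  refine ((hasDerivAt_id t).div (((hasDerivAt_pow 2 t).const_add 1).sqrt hq.ne')
    hsqrt.ne').congr_deriv ?_
  simp only [id, Nat.cast_ofNat, Nat.add_one_sub_one, pow_one]
  field_simp
  rw [hsq]
  ring

lemma integral_one_add_sq_cpow_neg {s : ℂ} (hs : 1 / 2 < s.re) :
    ∫ t : ℝ, ((1 + t ^ 2 : ℝ) : ℂ) ^ (-s) = Complex.betaIntegral (s - 1 / 2) (1 / 2) := by
  have hs' : 0 < (s - 1 / 2).re := by norm_num; linarith
  let f : ℝ → ℝ := fun t ↦ t / √(1 + t ^ 2)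
  have hf_eq : f = OpenPartialHomeomorph.univUnitBall (E := ℝ) := by
    ext t
    simp [f, OpenPartialHomeomorph.univUnitBall_apply, div_eq_inv_mul]
  have hf_inj : InjOn f univ := hf_eq ▸ OpenPartialHomeomorph.univUnitBall.injOn
  have hf_image : f '' univ = Ioo (-1) 1 := by
    rw [hf_eq, ← OpenPartialHomeomorph.univUnitBall_source,
      OpenPartialHomeomorph.image_source_eq_target, OpenPartialHomeomorph.univUnitBall_target,
      Real.ball_eq_Ioo, zero_sub, zero_add]
  rw [← integral_one_sub_sq_cpow hs', intervalIntegral.integral_of_le (by norm_num),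
    integral_Ioc_eq_integral_Ioo, ← hf_image,
    integral_image_eq_integral_abs_deriv_smul MeasurableSet.univ
      (fun t _ ↦ (hasDerivAt_div_sqrt_one_add_sq t).hasDerivWithinAt) hf_inj, setIntegral_univ]
  congr 1 with t
  have hq : 0 < 1 + t ^ 2 := by positivity
  have hq₀ : ((1 + t ^ 2 : ℝ) : ℂ) ≠ 0 := Complex.ofReal_ne_zero.mpr hq.ne'
  have hf_sq : 1 - f t ^ 2 = (1 + t ^ 2)⁻¹ := by
    rw [div_pow, Real.sq_sqrt hq.le]
    field_simp
    ring
  have hpow : ((1 + t ^ 2 : ℝ) : ℂ) ^ s = (1 + t ^ 2 : ℝ) * ((1 + t ^ 2 : ℝ) : ℂ) ^ (1 / 2 : ℂ) *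
      ((1 + t ^ 2 : ℝ) : ℂ) ^ (s - 1 / 2 - 1) := by
    nth_rewrite 2 [← Complex.cpow_one ((1 + t ^ 2 : ℝ) : ℂ)]
    rw [← Complex.cpow_add _ _ hq₀, ← Complex.cpow_add _ _ hq₀]
    ring_nf
  rw [hf_sq, abs_of_pos (by positivity), Complex.real_smul, Complex.ofReal_inv,
    Complex.ofReal_mul, Complex.ofReal_inv, Complex.inv_cpow_ofReal_nonneg hq.le, ← mul_inv,
    ofReal_sqrt_eq_cpow hq.le, Complex.cpow_neg, hpow]

lemma add_sq_cpow {a : ℝ} (ha : 0 < a) (t : ℝ) (z : ℂ) :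
    ((a + t ^ 2 : ℝ) : ℂ) ^ z = (a : ℂ) ^ z * ((1 + (t / √a) ^ 2 : ℝ) : ℂ) ^ z := by
  rw [← Complex.mul_cpow_ofReal_nonneg ha.le (by positivity), ← Complex.ofReal_mul, div_pow,
    Real.sq_sqrt ha.le]
  field_simp

lemma integrable_add_sq_cpow_neg {s : ℂ} (hs : 1 / 2 < s.re) {a : ℝ} (ha : 0 < a) :
    Integrable fun t : ℝ ↦ ((a + t ^ 2 : ℝ) : ℂ) ^ (-s) := by
  have h_one : Integrable fun t : ℝ ↦ ((1 + t ^ 2 : ℝ) : ℂ) ^ (-s) :=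
    .of_integral_ne_zero <| by
      rw [integral_one_add_sq_cpow_neg hs]
      exact betaIntegral_one_half_right_ne_zero (by norm_num; linarith)
  simp_rw [add_sq_cpow ha]
  exact (h_one.comp_div (by positivity)).const_mul _

lemma cpow_neg_mul_sqrt {a : ℝ} (ha : 0 < a) (s : ℂ) :
    (a : ℂ) ^ (-s) * (√a : ℝ) = (a : ℂ) ^ (1 / 2 - s) := by
  rw [ofReal_sqrt_eq_cpow ha.le, ← Complex.cpow_add _ _ (Complex.ofReal_ne_zero.mpr ha.ne'),
    neg_add_eq_sub]

lemma integral_add_sq_cpow_neg_s3 {s : ℂ} (hs : 1 / 2 < s.re) {a : ℝ} (ha : 0 < a) :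
    ∫ t : ℝ, ((a + t ^ 2 : ℝ) : ℂ) ^ (-s) =
      (a : ℂ) ^ (1 / 2 - s) * Complex.betaIntegral (s - 1 / 2) (1 / 2) := by
  simp_rw [add_sq_cpow ha]
  rw [integral_const_mul,
    Measure.integral_comp_div (fun t ↦ ((1 + t ^ 2 : ℝ) : ℂ) ^ (-s)), abs_of_nonneg (by positivity),
    integral_one_add_sq_cpow_neg hs, Complex.real_smul, ← mul_assoc, cpow_neg_mul_sqrt ha s]

lemma integral_norm_add_sq_cpow_neg {a : ℝ} (ha : 0 < a) (s : ℂ) :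
    ∫ t : ℝ, ‖((a + t ^ 2 : ℝ) : ℂ) ^ (-s)‖ =
      ‖(a : ℂ) ^ (1 / 2 - s)‖ * ∫ t : ℝ, ‖((1 + t ^ 2 : ℝ) : ℂ) ^ (-s)‖ := by
  simp_rw [add_sq_cpow ha, norm_mul]
  rw [integral_const_mul,
    Measure.integral_comp_div (fun t ↦ ‖((1 + t ^ 2 : ℝ) : ℂ) ^ (-s)‖),
    abs_of_nonneg (by positivity), smul_eq_mul, ← mul_assoc, ← cpow_neg_mul_sqrt ha s, norm_mul,
    Complex.norm_real, Real.norm_of_nonneg (by positivity)]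

lemma one_sub_mul_pos {x c : ℝ} (hx : |x| < 1) (hc : c ∈ Icc (-1) 1) : 0 < 1 - x * c := by
  have hxc : |x * c| ≤ |x| := by
    rw [abs_mul]
    exact mul_le_of_le_one_right (abs_nonneg x) (abs_le.mpr hc)
  exact sub_pos.mpr ((le_abs_self _).trans_lt (hxc.trans_lt hx))

lemma one_sub_two_mul_add_sq_pos {x c : ℝ} (hx : |x| < 1) (hc : c ∈ Icc (-1) 1) :
    0 < 1 - 2 * x * c + x ^ 2 := by
  have hc_sq : 0 ≤ 1 - c ^ 2 := by nlinarith [hc.1, hc.2]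
  calc 0 < (1 - x * c) ^ 2 + x ^ 2 * (1 - c ^ 2) :=
        add_pos_of_pos_of_nonneg (pow_pos (one_sub_mul_pos hx hc) 2) (by positivity)
    _ = 1 - 2 * x * c + x ^ 2 := by ring

/-- The cosine of the polar angle at which a point of the unit sphere is seen from the point at
signed height `x` on the polar axis, as a function of the cosine `c` of the polar angle at which it
is seen from the centre. It is the substitution that removes `x` from the Gegenbauer-type integral
`integral_one_sub_sq_cpow_mul_gegenbauer`. -/
noncomputable def apparentCos (x c : ℝ) : ℝ :=
  (c - x) / √(1 - 2 * x * c + x ^ 2)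

section ApparentCos

variable {x c : ℝ}

lemma apparentCos_one (hx : x < 1) : apparentCos x 1 = 1 := by
  have h : 0 < 1 - x := sub_pos.mpr hx
  rw [apparentCos, show 1 - 2 * x * 1 + x ^ 2 = (1 - x) ^ 2 by ring, Real.sqrt_sq h.le,
    div_self h.ne']

lemma apparentCos_neg_one (hx : -1 < x) : apparentCos x (-1) = -1 := by
  have h : 0 < 1 + x := neg_lt_iff_pos_add'.mp hx
  rw [apparentCos, show 1 - 2 * x * -1 + x ^ 2 = (1 + x) ^ 2 by ring, Real.sqrt_sq h.le,
    ← neg_add', neg_div, div_self h.ne']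

lemma one_sub_apparentCos_sq (hq : 0 < 1 - 2 * x * c + x ^ 2) :
    1 - apparentCos x c ^ 2 = (1 - c ^ 2) / (1 - 2 * x * c + x ^ 2) := by
  rw [apparentCos, div_pow, Real.sq_sqrt hq.le, eq_div_iff hq.ne', sub_mul,
    div_mul_cancel₀ _ hq.ne']
  ring

lemma hasDerivAt_apparentCos (hq : 0 < 1 - 2 * x * c + x ^ 2) :
    HasDerivAt (apparentCos x)
      ((1 - x * c) / ((1 - 2 * x * c + x ^ 2) * √(1 - 2 * x * c + x ^ 2))) c := by
  have hr := Real.sqrt_pos.mpr hq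
  have hr_sq := Real.sq_sqrt hq.le
  have hq' : HasDerivAt (fun c ↦ 1 - 2 * x * c + x ^ 2) (-(2 * x)) c := by
    simpa using (((hasDerivAt_id c).const_mul (2 * x)).const_sub 1).add_const (x ^ 2)
  refine (((hasDerivAt_id c).sub_const x).div (hq'.sqrt hq.ne') hr.ne').congr_deriv ?_
  simp only [id]
  field_simp
  rw [hr_sq]
  ring

-- In a direction of cosine `w`, the sphere lies at distance `√(1 - x²(1 - w²)) - xw` from the point
-- at height `x`; for `w = apparentCos x c` this distance is `√(1 - 2xc + x²)`.
lemma one_sub_mul_apparentCos_div_sqrt (hxc : 0 < 1 - x * c) (hq : 0 < 1 - 2 * x * c + x ^ 2) :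
    1 - x * apparentCos x c / √(1 - x ^ 2 * (1 - apparentCos x c ^ 2)) =
      (1 - 2 * x * c + x ^ 2) / (1 - x * c) := by
  have hr := Real.sqrt_pos.mpr hq
  have hD : 1 - x ^ 2 * (1 - apparentCos x c ^ 2) =
      (1 - x * c) ^ 2 / (1 - 2 * x * c + x ^ 2) := by
    rw [one_sub_apparentCos_sq hq, eq_div_iff hq.ne', sub_mul, mul_div_assoc',
      div_mul_cancel₀ _ hq.ne']
    ring
  rw [hD, Real.sqrt_div (sq_nonneg _), Real.sqrt_sq hxc.le, apparentCos, mul_div_assoc',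
    div_div_div_cancel_right₀ hr.ne', eq_div_iff hxc.ne', sub_mul, div_mul_cancel₀ _ hxc.ne']
  ring

lemma deriv_smul_apparentCos (hx : |x| < 1) (hc : c ∈ Icc (-1) 1) (s : ℂ) :
    ((1 - x * c) / ((1 - 2 * x * c + x ^ 2) * √(1 - 2 * x * c + x ^ 2))) •
        (((1 - apparentCos x c ^ 2 : ℝ) : ℂ) ^ (s - 1) *
          (1 - x * apparentCos x c / √(1 - x ^ 2 * (1 - apparentCos x c ^ 2)) : ℝ)) =
      ((1 - c ^ 2 : ℝ) : ℂ) ^ (s - 1) * ((1 - 2 * x * c + x ^ 2 : ℝ) : ℂ) ^ (1 / 2 - s) := by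
  have hxc := one_sub_mul_pos hx hc
  have hq := one_sub_two_mul_add_sq_pos hx hc
  have hc_sq : 0 ≤ 1 - c ^ 2 := by nlinarith [hc.1, hc.2]
  rw [one_sub_mul_apparentCos_div_sqrt hxc hq, one_sub_apparentCos_sq hq, Complex.ofReal_div,
    Complex.div_cpow_ofReal_nonneg hc_sq hq.le]
  generalize 1 - 2 * x * c + x ^ 2 = q at *
  have hq₀ : (q : ℂ) ≠ 0 := Complex.ofReal_ne_zero.mpr hq.ne'
  have hpow : (q : ℂ) ^ (1 / 2 - s) = ((q : ℂ) ^ (s - 1))⁻¹ * (√q : ℂ)⁻¹ := by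
    rw [ofReal_sqrt_eq_cpow hq.le, ← Complex.cpow_neg, ← Complex.cpow_neg,
      ← Complex.cpow_add _ _ hq₀]
    ring_nf
  rw [hpow, Complex.real_smul]
  push_cast
  have hxc' : (1 - x * c : ℂ) ≠ 0 := by exact_mod_cast hxc.ne'
  field_simp

end ApparentCos

lemma integral_one_sub_sq_cpow_mul_one_sub_of_odd {s : ℂ} (hs : 0 < s.re) {f : ℝ → ℝ}
    (hf : f.Odd) (hf_cont : ContinuousOn f (uIcc (-1) 1)) :
    ∫ w in (-1 : ℝ)..1, ((1 - w ^ 2 : ℝ) : ℂ) ^ (s - 1) * (1 - f w : ℝ) =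
      Complex.betaIntegral s (1 / 2) := by
  have hint := intervalIntegrable_one_sub_sq_cpow hs
  have hodd : (fun w : ℝ ↦ ((1 - w ^ 2 : ℝ) : ℂ) ^ (s - 1) * (f w : ℂ)).Odd := fun w ↦ by
    simp [hf w]
  have hf_cont' : ContinuousOn (fun w ↦ (f w : ℂ)) (uIcc (-1) 1) :=
    Complex.continuous_ofReal.comp_continuousOn hf_cont
  simp_rw [Complex.ofReal_sub 1 (f _), Complex.ofReal_one, mul_sub, mul_one]
  rw [intervalIntegral.integral_sub hint (hint.mul_continuousOn hf_cont'),
    integral_neg_self_eq_zero_of_odd hodd, sub_zero, integral_one_sub_sq_cpow hs]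

lemma integral_one_sub_sq_cpow_mul_gegenbauer {s : ℂ} (hs : 0 < s.re) {x : ℝ} (hx : |x| < 1) :
    ∫ c in (-1 : ℝ)..1, ((1 - c ^ 2 : ℝ) : ℂ) ^ (s - 1) *
      ((1 - 2 * x * c + x ^ 2 : ℝ) : ℂ) ^ (1 / 2 - s) = Complex.betaIntegral s (1 / 2) := by
  let f : ℝ → ℝ := fun w ↦ x * w / √(1 - x ^ 2 * (1 - w ^ 2))
  have hf_odd : f.Odd := fun w ↦ by simp [f, neg_div]
  have hf_cont : Continuous f := by
    have hpos (w : ℝ) : 0 < 1 - x ^ 2 * (1 - w ^ 2) := by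
      nlinarith [(sq_lt_one_iff_abs_lt_one x).mpr hx, mul_nonneg (sq_nonneg x) (sq_nonneg w)]
    exact .div (by fun_prop) (by fun_prop) fun w ↦ (Real.sqrt_pos.mpr (hpos w)).ne'
  have hderiv (c : ℝ) (hc : c ∈ Icc (-1) 1) :=
    hasDerivAt_apparentCos (one_sub_two_mul_add_sq_pos hx hc)
  have hderiv_nonneg (c : ℝ) (hc : c ∈ Icc (-1) 1) :
      0 ≤ (1 - x * c) / ((1 - 2 * x * c + x ^ 2) * √(1 - 2 * x * c + x ^ 2)) := by
    have hxc := one_sub_mul_pos hx hc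
    have hq := one_sub_two_mul_add_sq_pos hx hc
    positivity
  have hsubst := integral_Icc_deriv_smul_of_deriv_nonneg
    (g := fun w : ℝ ↦ ((1 - w ^ 2 : ℝ) : ℂ) ^ (s - 1) * (1 - f w : ℝ))
    (HasDerivAt.continuousOn hderiv) (fun c hc ↦ hderiv c (Ioo_subset_Icc_self hc))
    (fun c hc ↦ hderiv_nonneg c (Ioo_subset_Icc_self hc)) (neg_le_self zero_le_one)
  rw [apparentCos_one (abs_lt.mp hx).2, apparentCos_neg_one (abs_lt.mp hx).1,
    integral_Icc_eq_integral_Ioc, integral_Icc_eq_integral_Ioc,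
    ← intervalIntegral.integral_of_le (neg_le_self zero_le_one),
    ← intervalIntegral.integral_of_le (neg_le_self zero_le_one),
    integral_one_sub_sq_cpow_mul_one_sub_of_odd hs hf_odd hf_cont.continuousOn] at hsubst
  rw [← hsubst]
  refine intervalIntegral.integral_congr fun c hc ↦ (deriv_smul_apparentCos hx ?_ s).symm
  rwa [uIcc_of_le (neg_le_self zero_le_one)] at hc

lemma one_add_sq_div_sub_cpow {x u : ℝ} (hx : 0 < x) (hq : 0 ≤ 1 - 2 * x * (2 * u - 1) + x ^ 2)
    (z : ℂ) :
    (((1 + x) ^ 2 / (4 * x) - u : ℝ) : ℂ) ^ z =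
      ((4 * x : ℝ) : ℂ) ^ (-z) * ((1 - 2 * x * (2 * u - 1) + x ^ 2 : ℝ) : ℂ) ^ z := by
  have hσ : (1 + x) ^ 2 / (4 * x) - u = (1 - 2 * x * (2 * u - 1) + x ^ 2) / (4 * x) := by
    field_simp
    ring
  rw [hσ, Complex.ofReal_div, Complex.div_cpow_ofReal_nonneg hq (by positivity), Complex.cpow_neg,
    div_eq_inv_mul]

lemma cpow_sub_one_mul_cpow_half_sub {u : ℝ} (hu : u < 1) (s : ℂ) :
    (1 - u : ℂ) ^ (s - 1) * ((1 - u : ℝ) : ℂ) ^ (1 / 2 - s) = (1 - u : ℂ) ^ (1 / 2 - 1 : ℂ) := by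
  have h1u : (1 - u : ℂ) ≠ 0 := by exact_mod_cast (sub_pos.mpr hu).ne'
  rw [Complex.ofReal_sub, Complex.ofReal_one, ← Complex.cpow_add _ _ h1u]
  ring_nf

section Kernel

variable {s : ℂ}

lemma integral_cpow_mul_one_sub_cpow_mul_sub_cpow (hs : 0 < s.re) {x : ℝ} (hx₀ : 0 < x)
    (hx₁ : x ≤ 1) :
    ∫ u in (0 : ℝ)..1, (u : ℂ) ^ (s - 1) * (1 - (u : ℂ)) ^ (s - 1) *
        (((1 + x) ^ 2 / (4 * x) - u : ℝ) : ℂ) ^ (1 / 2 - s) =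
      (x : ℂ) ^ (s - 1 / 2) * Complex.betaIntegral s (1 / 2) := by
  rcases hx₁.eq_or_lt with rfl | hx₁
  · rw [Complex.betaIntegral, Complex.ofReal_one, Complex.one_cpow, one_mul]
    simp_rw [intervalIntegral.integral_of_le zero_le_one, integral_Ioc_eq_integral_Ioo]
    refine setIntegral_congr_fun measurableSet_Ioo fun u hu ↦ ?_
    rw [show ((1 : ℝ) + 1) ^ 2 / (4 * 1) = 1 by norm_num, mul_assoc,
      cpow_sub_one_mul_cpow_half_sub hu.2]
  · have hx : |x| < 1 := by rwa [abs_of_pos hx₀]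
    have hkernel : ∀ u ∈ uIcc (0 : ℝ) 1, (u : ℂ) ^ (s - 1) * (1 - (u : ℂ)) ^ (s - 1) *
          (((1 + x) ^ 2 / (4 * x) - u : ℝ) : ℂ) ^ (1 / 2 - s) =
        ((4 * x : ℝ) : ℂ) ^ (s - 1 / 2) * ((u : ℂ) ^ (s - 1) * (1 - (u : ℂ)) ^ (s - 1) *
          ((1 - 2 * x * (2 * u - 1) + x ^ 2 : ℝ) : ℂ) ^ (1 / 2 - s)) := fun u hu ↦ by
      rw [uIcc_of_le zero_le_one] at hu
      have hq : 0 < 1 - 2 * x * (2 * u - 1) + x ^ 2 :=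
        one_sub_two_mul_add_sq_pos hx ⟨by linarith [hu.1], by linarith [hu.2]⟩
      rw [one_add_sq_div_sub_cpow hx₀ hq.le, neg_sub, mul_left_comm]
    rw [intervalIntegral.integral_congr hkernel, intervalIntegral.integral_const_mul,
      integral_cpow_mul_one_sub_cpow_mul_comp (s - 1)
        fun c ↦ ((1 - 2 * x * c + x ^ 2 : ℝ) : ℂ) ^ (1 / 2 - s),
      integral_one_sub_sq_cpow_mul_gegenbauer hs hx, Complex.ofReal_mul,
      Complex.mul_cpow_ofReal_nonneg zero_le_four hx₀.le,
      show -2 * (s - 1) - 1 = -2 * (s - 1 / 2) by ring]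
    linear_combination (x : ℂ) ^ (s - 1 / 2) * Complex.betaIntegral s (1 / 2) *
      two_cpow_neg_two_mul_mul_four_cpow (s - 1 / 2)

lemma integrableOn_cpow_mul_one_sub_cpow_mul_sub_cpow (hs : 1 / 2 ≤ s.re) {σ : ℝ} (hσ : 1 ≤ σ) :
    IntegrableOn (fun u : ℝ ↦ (u : ℂ) ^ (s - 1) * (1 - (u : ℂ)) ^ (s - 1) *
      ((σ - u : ℝ) : ℂ) ^ (1 / 2 - s)) (Ioo 0 1) := by
  have hbeta : IntegrableOn (fun u : ℝ ↦ (u : ℂ) ^ (s - 1) * (1 - (u : ℂ)) ^ (1 / 2 - 1 : ℂ))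
      (Ioo 0 1) := by
    rw [← intervalIntegrable_iff_integrableOn_Ioo_of_le zero_le_one]
    exact Complex.betaIntegral_convergent (by linarith) (by norm_num)
  refine hbeta.norm.mono' (Measurable.aestronglyMeasurable (by fun_prop)) ?_
  filter_upwards [ae_restrict_mem measurableSet_Ioo] with u hu
  have h1u : 0 < 1 - u := sub_pos.mpr hu.2
  have hmono : ‖((σ - u : ℝ) : ℂ) ^ (1 / 2 - s)‖ ≤ ‖((1 - u : ℝ) : ℂ) ^ (1 / 2 - s)‖ := by
    rw [Complex.norm_cpow_eq_rpow_re_of_pos h1u,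
      Complex.norm_cpow_eq_rpow_re_of_pos (by linarith)]
    exact Real.rpow_le_rpow_of_nonpos h1u (by linarith) (by norm_num; linarith)
  rw [← cpow_sub_one_mul_cpow_half_sub hu.2 s, ← mul_assoc, norm_mul, norm_mul _ (_ ^ (1 / 2 - s))]
  gcongr

lemma integrable_cpow_mul_one_sub_cpow_mul_add_sq_cpow (hs : 1 / 2 < s.re) {σ : ℝ} (hσ : 1 ≤ σ) :
    Integrable (fun p : ℝ × ℝ ↦ (p.2 : ℂ) ^ (s - 1) * (1 - (p.2 : ℂ)) ^ (s - 1) *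
      ((σ - p.2 + p.1 ^ 2 : ℝ) : ℂ) ^ (-s)) (volume.prod (volume.restrict (Ioo 0 1))) := by
  refine (integrable_prod_iff' (Measurable.aestronglyMeasurable (by fun_prop))).mpr ⟨?_, ?_⟩
  · filter_upwards [ae_restrict_mem measurableSet_Ioo] with u hu
    exact (integrable_add_sq_cpow_neg hs (by linarith [hu.2])).const_mul _
  · refine ((integrableOn_cpow_mul_one_sub_cpow_mul_sub_cpow hs.le hσ).norm.mul_const
      (∫ t : ℝ, ‖((1 + t ^ 2 : ℝ) : ℂ) ^ (-s)‖)).congr ?_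
    filter_upwards [ae_restrict_mem measurableSet_Ioo] with u hu
    simp_rw [norm_mul _ (_ ^ (-s))]
    rw [integral_const_mul, integral_norm_add_sq_cpow_neg (by linarith [hu.2] : 0 < σ - u),
      ← mul_assoc, norm_mul _ (_ ^ (1 / 2 - s))]

lemma integral_greenH_add_sq (hs : 1 / 2 < s.re) {σ : ℝ} (hσ : 1 ≤ σ) :
    ∫ t : ℝ, greenH s (σ + t ^ 2) =
      1 / (4 * Real.pi) * ((∫ u in (0 : ℝ)..1, (u : ℂ) ^ (s - 1) * (1 - (u : ℂ)) ^ (s - 1) *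
        ((σ - u : ℝ) : ℂ) ^ (1 / 2 - s)) * Complex.betaIntegral (s - 1 / 2) (1 / 2)) := by
  have hgreen (t : ℝ) : greenH s (σ + t ^ 2) = 1 / (4 * Real.pi) * ∫ u in Ioo (0 : ℝ) 1,
      (u : ℂ) ^ (s - 1) * (1 - (u : ℂ)) ^ (s - 1) * ((σ - u + t ^ 2 : ℝ) : ℂ) ^ (-s) := by
    simp_rw [greenH, ← Complex.ofReal_sub (σ + t ^ 2), add_sub_right_comm]
  simp_rw [hgreen]
  rw [integral_const_mul,
    integral_integral_swap (integrable_cpow_mul_one_sub_cpow_mul_add_sq_cpow hs hσ),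
    intervalIntegral.integral_of_le zero_le_one, integral_Ioc_eq_integral_Ioo, ← integral_mul_const]
  congr 1
  refine setIntegral_congr_fun measurableSet_Ioo fun u hu ↦ ?_
  rw [integral_const_mul, integral_add_sq_cpow_neg_s3 hs (by linarith [hu.2]), ← mul_assoc]

end Kernel

lemma one_le_max_inv {κ : ℝ} (hκ : 0 < κ) : 1 ≤ max κ κ⁻¹ :=
  (le_total 1 κ).elim le_max_of_le_left fun h ↦ le_max_of_le_right ((one_le_inv₀ hκ).mpr h)

lemma one_add_inv_max_sq_div {κ : ℝ} (hκ : 0 < κ) :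
    (1 + (max κ κ⁻¹)⁻¹) ^ 2 / (4 * (max κ κ⁻¹)⁻¹) = (1 + κ) ^ 2 / (4 * κ) := by
  rcases max_choice κ κ⁻¹ with h | h <;> rw [h]
  · field_simp
    ring
  · rw [inv_inv]

lemma integral_greenH_one_add_sq_div_add_sq {s : ℂ} (hs : 1 / 2 < s.re) {κ : ℝ} (hκ : 0 < κ) :
    (2 * s - 1) * ∫ t : ℝ, greenH s ((1 + κ) ^ 2 / (4 * κ) + t ^ 2) =
      ((max κ κ⁻¹ : ℝ) : ℂ) ^ (1 / 2 - s) / 2 := by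
  have hmax := one_le_max_inv hκ
  have hmax_pos : 0 < max κ κ⁻¹ := zero_lt_one.trans_le hmax
  have hσ : 1 ≤ (1 + κ) ^ 2 / (4 * κ) := by
    rw [one_le_div (by positivity)]
    linarith [four_mul_le_sq_add 1 κ]
  have hbeta := mul_betaIntegral_mul_betaIntegral_add_half (s := s - 1 / 2) (by norm_num; linarith)
  rw [sub_add_cancel] at hbeta
  have hπ : (Real.pi : ℂ) * (Real.pi : ℂ)⁻¹ = 1 :=
    mul_inv_cancel₀ (Complex.ofReal_ne_zero.mpr Real.pi_ne_zero)
  rw [integral_greenH_add_sq hs hσ, ← one_add_inv_max_sq_div hκ,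
    integral_cpow_mul_one_sub_cpow_mul_sub_cpow (by linarith) (inv_pos.mpr hmax_pos)
      (inv_le_one_of_one_le₀ hmax), Complex.ofReal_inv,
    Complex.inv_cpow_ofReal_nonneg hmax_pos.le, ← Complex.cpow_neg, neg_sub]
  linear_combination ((max κ κ⁻¹ : ℝ) : ℂ) ^ (1 / 2 - s) / (2 * Real.pi) * hbeta +
    ((max κ κ⁻¹ : ℝ) : ℂ) ^ (1 / 2 - s) / 2 * hπ

lemma sqrt_add_sqrt_inv_div_two_sq {κ : ℝ} (hκ : 0 < κ) :
    ((√κ + √κ⁻¹) / 2) ^ 2 = (1 + κ) ^ 2 / (4 * κ) := by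
  rw [Real.sqrt_inv]
  field_simp
  rw [Real.sq_sqrt hκ.le]
  ring

/-- Patterson's integral formula (equation (A.5) of the paper):  for `Re s > 1/2` and
`κ > 0`, `(2s-1) ∫_{-∞}^∞ g_s((1+t²)(1+κ)²/(4κ)) dt = max(κ,κ⁻¹)^{1/2-s}/(κ^{1/2}+κ^{-1/2})`. -/
theorem integral_greenH_eq (s : ℂ) (hs : 1 / 2 < s.re) (κ : ℝ) (hκ : 0 < κ) :
    (2 * s - 1) * ∫ t : ℝ, greenH s ((1 + t ^ 2) * (1 + κ) ^ 2 / (4 * κ)) =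
      ((max κ κ⁻¹ : ℝ) : ℂ) ^ (1 / 2 - s) /
        (((Real.sqrt κ : ℝ) : ℂ) + ((Real.sqrt κ⁻¹ : ℝ) : ℂ)) := by
  have hscale (t : ℝ) : (1 + t ^ 2) * (1 + κ) ^ 2 / (4 * κ) =
      (1 + κ) ^ 2 / (4 * κ) + ((√κ + √κ⁻¹) / 2 * t) ^ 2 := by
    rw [mul_pow, sqrt_add_sqrt_inv_div_two_sq hκ]
    ring
  simp_rw [hscale]
  rw [Measure.integral_comp_mul_left (fun t ↦ greenH s ((1 + κ) ^ 2 / (4 * κ) + t ^ 2)),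
    mul_smul_comm, integral_greenH_one_add_sq_div_add_sq hs hκ, abs_of_nonneg (by positivity),
    Complex.real_smul]
  push_cast
  field_simp
end

section
/- Let s be a complex number with Re(s) > 1/2. Then 4(2s−1) ∫₀^∞ g_s(1 + u²) du = 1. -/
open MeasureTheory

/-!
Integrating over `u` first, the substitution `u = √(1 - t) v` turns
`∫₀^∞ (1 - t + u²)^(-s) du` into `(1 - t)^(1/2 - s) B(1/2, s - 1/2) / 2`; applied to the norms, it
also gives the absolute convergence that Fubini's theorem requires. The remaining integral over `t`
is `B(s, 1/2)`, and in the product of the two Beta values the Gamma factors telescope: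
`B(1/2, s - 1/2) B(s, 1/2) = Γ(1/2)² Γ(s - 1/2) / Γ(s + 1/2) = π / (s - 1/2)`.
-/

open Complex Set

section BetaIntegral

lemma betaIntegral_eq_setIntegral_Ioo (a b : ℂ) :
    betaIntegral a b = ∫ x in Ioo (0 : ℝ) 1, (x : ℂ) ^ (a - 1) * (1 - (x : ℂ)) ^ (b - 1) := by
  rw [betaIntegral, intervalIntegral.integral_of_le zero_le_one, integral_Ioc_eq_integral_Ioo]

lemma integrableOn_Ioo_cpow_mul_one_sub_cpow {a b : ℂ} (ha : 0 < a.re) (hb : 0 < b.re) :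
    IntegrableOn (fun x : ℝ ↦ (x : ℂ) ^ (a - 1) * (1 - (x : ℂ)) ^ (b - 1)) (Ioo 0 1) :=
  (intervalIntegrable_iff_integrableOn_Ioo_of_le zero_le_one).1 (betaIntegral_convergent ha hb)

lemma betaIntegral_mul_betaIntegral_add {a b c : ℂ} (ha : 0 < a.re) (hb : 0 < b.re)
    (hc : 0 < c.re) :
    betaIntegral a b * betaIntegral (a + b) c =
      Gamma a * Gamma b * Gamma c / Gamma (a + b + c) := by
  have hab : 0 < (a + b).re := by simpa using add_pos ha hb
  have hΓ : Gamma (a + b) ≠ 0 := Gamma_ne_zero_of_re_pos hab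
  rw [betaIntegral_eq_Gamma_mul_div a b ha hb, betaIntegral_eq_Gamma_mul_div (a + b) c hab hc,
    div_mul_div_comm, mul_left_comm, mul_div_mul_left _ _ hΓ]

lemma Gamma_one_half_mul_self : Gamma (1 / 2) * Gamma (1 / 2) = Real.pi := by
  rw [Gamma_one_half_eq, ← cpow_add _ _ (ofReal_ne_zero.2 Real.pi_ne_zero), add_halves, cpow_one]

lemma betaIntegral_half_mul_betaIntegral_half {s : ℂ} (hs : 1 / 2 < s.re) :
    (s - 1 / 2) * (betaIntegral (1 / 2) (s - 1 / 2) * betaIntegral s (1 / 2)) = Real.pi := by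
  have hhalf : 0 < (1 / 2 : ℂ).re := by norm_num
  have hre : 0 < (s - 1 / 2).re := by simpa using hs
  have hne : s - 1 / 2 ≠ 0 := fun h ↦ hre.ne' (by rw [h, zero_re])
  have hprod := betaIntegral_mul_betaIntegral_add hhalf hre hhalf
  rw [add_sub_cancel, show s + 1 / 2 = s - 1 / 2 + 1 by ring, Gamma_add_one _ hne] at hprod
  rw [hprod, ← mul_div_assoc, mul_div_mul_left _ _ hne, mul_right_comm,
    mul_div_cancel_right₀ _ (Gamma_ne_zero_of_re_pos hre), Gamma_one_half_mul_self]

end BetaIntegral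

section BetaPrime

lemma image_inv_one_add_Ioi : (fun x : ℝ ↦ (1 + x)⁻¹) '' Ioi 0 = Ioo 0 1 := by
  ext t
  constructor
  · rintro ⟨x, hx : 0 < x, rfl⟩
    exact ⟨by positivity, inv_lt_one_of_one_lt₀ (by linarith)⟩
  · rintro ⟨h0, h1⟩
    exact ⟨t⁻¹ - 1, sub_pos.2 ((one_lt_inv₀ h0).2 h1), by simp⟩

lemma setIntegral_Ioo_eq_integral_Ioi_inv_one_add {E : Type*} [NormedAddCommGroup E]
    [NormedSpace ℝ E] (f : ℝ → E) :
    ∫ t in Ioo (0 : ℝ) 1, f t = ∫ x in Ioi (0 : ℝ), ((1 + x) ^ 2)⁻¹ • f (1 + x)⁻¹ := by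
  have hderiv : ∀ x ∈ Ioi (0 : ℝ),
      HasDerivWithinAt (fun x : ℝ ↦ (1 + x)⁻¹) (-1 / (1 + x) ^ 2) (Ioi 0) x := fun x hx ↦
    (((hasDerivAt_id x).const_add 1).inv (by have : 0 < x := hx; positivity)).hasDerivWithinAt
  have hinj : InjOn (fun x : ℝ ↦ (1 + x)⁻¹) (Ioi 0) := fun x _ y _ hxy ↦
    add_left_cancel (inv_injective hxy)
  rw [← image_inv_one_add_Ioi,
    integral_image_eq_integral_abs_deriv_smul measurableSet_Ioi hderiv hinj]
  simp only [neg_div, abs_neg, one_div, abs_inv, abs_sq]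

lemma integral_Ioi_cpow_mul_one_add_cpow (a b : ℂ) :
    ∫ x in Ioi (0 : ℝ), (x : ℂ) ^ (a - 1) * (1 + (x : ℂ)) ^ (-(a + b)) = betaIntegral a b := by
  rw [← betaIntegral_symm, betaIntegral_eq_setIntegral_Ioo,
    setIntegral_Ioo_eq_integral_Ioi_inv_one_add]
  refine setIntegral_congr_fun measurableSet_Ioi fun x (hx : 0 < x) ↦ ?_
  have hpos : 0 < 1 + x := by positivity
  have hne : (1 + x : ℂ) ≠ 0 := mod_cast hpos.ne'
  have harg : (1 + x : ℂ).arg ≠ Real.pi := by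
    rw [← ofReal_one, ← ofReal_add, arg_ofReal_of_nonneg hpos.le]
    exact Real.pi_ne_zero.symm
  have hsub : 1 - (((1 + x)⁻¹ : ℝ) : ℂ) = (x : ℂ) * (((1 + x)⁻¹ : ℝ) : ℂ) := by
    push_cast
    field_simp
    ring
  have hexp : (1 + x : ℂ) ^ (-(a + b)) =
      ((1 + x : ℂ) ^ 2)⁻¹ * ((1 + x : ℂ) ^ (-(b - 1)) * (1 + x : ℂ) ^ (-(a - 1))) := by
    rw [← cpow_ofNat, ← cpow_neg, ← cpow_add _ _ hne, ← cpow_add _ _ hne]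
    congr 1
    ring
  simp only [real_smul]
  rw [hsub, mul_cpow_ofReal_nonneg hx.le (inv_nonneg.2 hpos.le), hexp]
  push_cast
  rw [inv_cpow _ _ harg, inv_cpow _ _ harg, ← cpow_neg, ← cpow_neg]
  ring

lemma integral_Ioi_one_add_sq_cpow (s : ℂ) :
    ∫ v in Ioi (0 : ℝ), (1 + (v : ℂ) ^ 2) ^ (-s) = betaIntegral (1 / 2) (s - 1 / 2) / 2 := by
  have hsubst := integral_comp_rpow_Ioi_of_pos (p := 2) two_pos
    (g := fun x : ℝ ↦ (x : ℂ) ^ ((1 / 2 : ℂ) - 1) * (1 + (x : ℂ)) ^ (-(1 / 2 + (s - 1 / 2))))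
  rw [integral_Ioi_cpow_mul_one_add_cpow] at hsubst
  rw [← hsubst, eq_div_iff two_ne_zero, ← integral_mul_const]
  refine setIntegral_congr_fun measurableSet_Ioi fun v (hv : 0 < v) ↦ ?_
  have hinv : ((v : ℂ) ^ 2) ^ (1 / 2 - 1 : ℂ) = (v : ℂ)⁻¹ := by
    rw [← ofReal_pow, show (1 / 2 - 1 : ℂ) = ((-(1 / 2) : ℝ) : ℂ) by push_cast; ring,
      ← ofReal_cpow (sq_nonneg v), Real.rpow_neg (sq_nonneg v), ← Real.sqrt_eq_rpow,
      Real.sqrt_sq hv.le, ofReal_inv]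
  have hv0 : (v : ℂ) ≠ 0 := ofReal_ne_zero.2 hv.ne'
  have hpow : 2 * v ^ ((2 : ℝ) - 1) = 2 * v := by norm_num
  simp only [Real.rpow_two, ofReal_pow, add_sub_cancel, real_smul]
  rw [hinv, hpow]
  push_cast
  field_simp

end BetaPrime

section AddSq

lemma add_sqrt_mul_sq_cpow {c : ℝ} (hc : 0 < c) (v : ℝ) (z : ℂ) :
    ((c : ℂ) + ((√c * v : ℝ) : ℂ) ^ 2) ^ z = (c : ℂ) ^ z * (1 + (v : ℂ) ^ 2) ^ z := by
  have hfactor : (c : ℂ) + ((√c * v : ℝ) : ℂ) ^ 2 = (c : ℂ) * ((1 + v ^ 2 : ℝ) : ℂ) := by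
    rw [← ofReal_pow, mul_pow, Real.sq_sqrt hc.le]
    push_cast
    ring
  rw [hfactor, mul_cpow_ofReal_nonneg hc.le (by positivity)]
  push_cast
  rfl

lemma cpow_half_sub {c : ℝ} (hc : 0 < c) (s : ℂ) :
    (c : ℂ) ^ (1 / 2 - s) = (√c : ℂ) * (c : ℂ) ^ (-s) := by
  rw [sub_eq_add_neg, cpow_add _ _ (ofReal_ne_zero.2 hc.ne'), Real.sqrt_eq_rpow,
    ofReal_cpow hc.le]
  norm_num

lemma integral_Ioi_add_sq_cpow (s : ℂ) {c : ℝ} (hc : 0 < c) :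
    ∫ u in Ioi (0 : ℝ), ((c : ℂ) + (u : ℂ) ^ 2) ^ (-s) =
      (c : ℂ) ^ (1 / 2 - s) * (betaIntegral (1 / 2) (s - 1 / 2) / 2) := by
  have hscale := integral_comp_mul_left_Ioi' (fun u : ℝ ↦ ((c : ℂ) + (u : ℂ) ^ 2) ^ (-s)) 0
    (Real.sqrt_pos.2 hc)
  simp only [add_sqrt_mul_sq_cpow hc, mul_zero, integral_const_mul] at hscale
  rw [← hscale, integral_Ioi_one_add_sq_cpow, cpow_half_sub hc, real_smul, mul_assoc]

lemma integral_Ioi_norm_add_sq_cpow (s : ℂ) {c : ℝ} (hc : 0 < c) :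
    ∫ u in Ioi (0 : ℝ), ‖((c : ℂ) + (u : ℂ) ^ 2) ^ (-s)‖ =
      ‖(c : ℂ) ^ (1 / 2 - s)‖ * ∫ v in Ioi (0 : ℝ), ‖(1 + (v : ℂ) ^ 2) ^ (-s)‖ := by
  have hscale := integral_comp_mul_left_Ioi' (fun u : ℝ ↦ ‖((c : ℂ) + (u : ℂ) ^ 2) ^ (-s)‖) 0
    (Real.sqrt_pos.2 hc)
  simp only [add_sqrt_mul_sq_cpow hc, mul_zero, norm_mul, integral_const_mul] at hscale
  rw [← hscale, cpow_half_sub hc, norm_mul, norm_real,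
    Real.norm_of_nonneg (Real.sqrt_nonneg c), smul_eq_mul, mul_assoc]

lemma integrable_one_add_sq_cpow {s : ℂ} (hs : 1 / 2 < s.re) :
    Integrable (fun v : ℝ ↦ (1 + (v : ℂ) ^ 2) ^ (-s)) := by
  have hdim : (Module.finrank ℝ ℝ : ℝ) < 2 * s.re := by
    rw [Module.finrank_self, Nat.cast_one]
    linarith
  refine (integrable_rpow_neg_one_add_norm_sq (μ := volume) hdim).mono'
    (Measurable.aestronglyMeasurable (by fun_prop)) (.of_forall fun v ↦ le_of_eq ?_)
  have hpos : 0 < 1 + v ^ 2 := by positivity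
  rw [← ofReal_pow, ← ofReal_one, ← ofReal_add, norm_cpow_eq_rpow_re_of_pos hpos,
    Real.norm_eq_abs, sq_abs, neg_re]
  congr 1
  ring

lemma integrableOn_Ioi_add_sq_cpow {s : ℂ} (hs : 1 / 2 < s.re) {c : ℝ} (hc : 0 < c) :
    IntegrableOn (fun u : ℝ ↦ ((c : ℂ) + (u : ℂ) ^ 2) ^ (-s)) (Ioi 0) := by
  have hscale := integrableOn_Ioi_comp_mul_left_iff
    (fun u : ℝ ↦ ((c : ℂ) + (u : ℂ) ^ 2) ^ (-s)) 0 (Real.sqrt_pos.2 hc)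
  simp only [add_sqrt_mul_sq_cpow hc, mul_zero] at hscale
  exact hscale.1 ((integrable_one_add_sq_cpow hs).integrableOn.const_mul _)

end AddSq

section Fubini

variable {X : Type*} [MeasurableSpace X] {μ : Measure X} [SFinite μ] {g : X → ℂ} {h : X → ℝ}
  {s : ℂ}

lemma integrable_prod_mul_add_sq_cpow (hs : 1 / 2 < s.re) (hg : AEStronglyMeasurable g μ)
    (hh : AEMeasurable h μ) (hpos : ∀ᵐ x ∂μ, 0 < h x)
    (hgh : Integrable (fun x ↦ g x * (h x : ℂ) ^ (1 / 2 - s)) μ) :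
    Integrable (fun p : ℝ × X ↦ g p.2 * ((h p.2 : ℂ) + (p.1 : ℂ) ^ 2) ^ (-s))
      ((volume.restrict (Ioi 0)).prod μ) := by
  have hbase : AEMeasurable (fun p : ℝ × X ↦ (h p.2 : ℂ) + (p.1 : ℂ) ^ 2)
      ((volume.restrict (Ioi 0)).prod μ) :=
    hh.comp_snd.complex_ofReal.add (Measurable.aemeasurable (by fun_prop))
  have hmeas : AEStronglyMeasurable
      (fun p : ℝ × X ↦ g p.2 * ((h p.2 : ℂ) + (p.1 : ℂ) ^ 2) ^ (-s))
      ((volume.restrict (Ioi 0)).prod μ) :=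
    hg.comp_snd.mul (hbase.pow_const (-s)).aestronglyMeasurable
  rw [integrable_prod_iff' hmeas]
  constructor
  · filter_upwards [hpos] with x hx
    exact (integrableOn_Ioi_add_sq_cpow hs hx).const_mul _
  · refine (hgh.norm.mul_const (∫ v in Ioi (0 : ℝ), ‖(1 + (v : ℂ) ^ 2) ^ (-s)‖)).congr ?_
    filter_upwards [hpos] with x hx
    simp only [norm_mul, integral_const_mul]
    rw [integral_Ioi_norm_add_sq_cpow s hx, mul_assoc]

lemma integral_Ioi_integral_mul_add_sq_cpow (hs : 1 / 2 < s.re) (hg : AEStronglyMeasurable g μ)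
    (hh : AEMeasurable h μ) (hpos : ∀ᵐ x ∂μ, 0 < h x)
    (hgh : Integrable (fun x ↦ g x * (h x : ℂ) ^ (1 / 2 - s)) μ) :
    ∫ u in Ioi (0 : ℝ), ∫ x, g x * ((h x : ℂ) + (u : ℂ) ^ 2) ^ (-s) ∂μ =
      (∫ x, g x * (h x : ℂ) ^ (1 / 2 - s) ∂μ) * (betaIntegral (1 / 2) (s - 1 / 2) / 2) := by
  rw [integral_integral_swap (integrable_prod_mul_add_sq_cpow hs hg hh hpos hgh),
    ← integral_mul_const]
  refine integral_congr_ae ?_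
  filter_upwards [hpos] with x hx
  rw [integral_const_mul, integral_Ioi_add_sq_cpow s hx, mul_assoc]

end Fubini

lemma greenH_one_add_sq (s : ℂ) (u : ℝ) :
    greenH s (1 + u ^ 2) = 1 / (4 * (Real.pi : ℂ)) * ∫ t in Ioo (0 : ℝ) 1,
      (t : ℂ) ^ (s - 1) * (1 - (t : ℂ)) ^ (s - 1) *
        (((1 - t : ℝ) : ℂ) + (u : ℂ) ^ 2) ^ (-s) := by
  simp only [greenH, ofReal_add, ofReal_sub, ofReal_one, ofReal_pow, sub_add_eq_add_sub]

lemma integral_greenH_one_add_sq {s : ℂ} (hs : 1 / 2 < s.re) :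
    ∫ u in Ioi (0 : ℝ), greenH s (1 + u ^ 2) = 1 / (4 * (Real.pi : ℂ)) *
      (betaIntegral s (1 / 2) * (betaIntegral (1 / 2) (s - 1 / 2) / 2)) := by
  have hweight : EqOn
      (fun t : ℝ ↦ (t : ℂ) ^ (s - 1) * (1 - (t : ℂ)) ^ ((1 / 2 : ℂ) - 1))
      (fun t : ℝ ↦ (t : ℂ) ^ (s - 1) * (1 - (t : ℂ)) ^ (s - 1) * ((1 - t : ℝ) : ℂ) ^ (1 / 2 - s))
      (Ioo 0 1) := fun t ht ↦ by
    have hne : (1 - t : ℂ) ≠ 0 := mod_cast (sub_pos.2 ht.2).ne'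
    simp only [ofReal_sub, ofReal_one]
    rw [mul_assoc, ← cpow_add _ _ hne, add_comm, sub_add_sub_cancel]
  have hconv := integrableOn_Ioo_cpow_mul_one_sub_cpow (a := s) (b := 1 / 2) (by linarith)
    (by norm_num)
  simp only [greenH_one_add_sq]
  rw [integral_const_mul, integral_Ioi_integral_mul_add_sq_cpow hs
    (Measurable.aestronglyMeasurable (by fun_prop)) (by fun_prop)
    ((ae_restrict_mem measurableSet_Ioo).mono fun t ht ↦ sub_pos.2 ht.2)
    (hconv.congr_fun hweight measurableSet_Ioo),
    ← setIntegral_congr_fun measurableSet_Ioo hweight, ← betaIntegral_eq_setIntegral_Ioo]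

/-- Equation (A.6) of the paper: for `Re s > 1/2`, `4(2s-1) ∫₀^∞ g_s(1+u²) du = 1`. -/
theorem four_mul_integral_greenH_eq_one (s : ℂ) (hs : 1 / 2 < s.re) :
    4 * (2 * s - 1) * ∫ u in Set.Ioi (0:ℝ), greenH s (1 + u ^ 2) = 1 := by
  have hpi : (Real.pi : ℂ) ≠ 0 := ofReal_ne_zero.2 Real.pi_ne_zero
  calc 4 * (2 * s - 1) * ∫ u in Ioi (0 : ℝ), greenH s (1 + u ^ 2)
      = (s - 1 / 2) * (betaIntegral (1 / 2) (s - 1 / 2) * betaIntegral s (1 / 2)) / Real.pi := by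
        rw [integral_greenH_one_add_sq hs]
        field_simp
    _ = 1 := by rw [betaIntegral_half_mul_betaIntegral_half hs, div_self hpi]
end

section
/- Let ℓ > 0 and let s be a complex number with Re(s) > −1. Then both of the following series converge and are equal: ∑_{m=1}^∞ e^{−(s+1)mℓ}/(1 − e^{−2mℓ}) = ∑_{k=0}^∞ e^{−(s+2k+1)ℓ}/(1 − e^{−(s+2k+1)ℓ}). -/
/-!
Put `q = e^{-(s+1)ℓ}` and `r = e^{-2ℓ}`, both of norm less than one. The double series of
`q ^ (m + 1) * r ^ ((m + 1) * k)` converges absolutely. Summing it over `k` first gives the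
geometric series of ratio `r ^ (m + 1)`, hence the left-hand side; its terms are also
`(q * r ^ k) ^ (m + 1)`, so summing over `m` first gives the geometric series of ratio `q * r ^ k`,
hence the right-hand side.
-/

theorem summable_pow_succ_mul_pow_succ_mul {R : Type*} [NormedRing R] [NormOneClass R]
    [CompleteSpace R] {q r : R} (hq : ‖q‖ < 1) (hr : ‖r‖ < 1) :
    Summable fun p : ℕ × ℕ ↦ q ^ (p.1 + 1) * r ^ ((p.1 + 1) * p.2) := by
  have hgeom : Summable fun p : ℕ × ℕ ↦ ‖q‖ ^ p.1 * ‖r‖ ^ p.2 :=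
    (summable_geometric_of_lt_one (norm_nonneg q) hq).mul_of_nonneg
      (summable_geometric_of_lt_one (norm_nonneg r) hr)
      (fun _ ↦ by positivity) (fun _ ↦ by positivity)
  refine hgeom.of_norm_bounded fun ⟨m, k⟩ ↦ ?_
  calc ‖q ^ (m + 1) * r ^ ((m + 1) * k)‖
      ≤ ‖q‖ ^ (m + 1) * ‖r‖ ^ ((m + 1) * k) :=
        (norm_mul_le _ _).trans (by gcongr <;> exact norm_pow_le _ _)
    _ ≤ ‖q‖ ^ m * ‖r‖ ^ k := by
        gcongr ?_ * ?_
        · exact pow_le_pow_of_le_one (norm_nonneg q) hq.le m.le_succ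
        · exact pow_le_pow_of_le_one (norm_nonneg r) hr.le (Nat.le_mul_of_pos_left k m.succ_pos)

theorem hasSum_pow_succ_div_one_sub_pow_succ {𝕜 : Type*} [NormedDivisionRing 𝕜] [CompleteSpace 𝕜]
    {q r : 𝕜} (hq : ‖q‖ < 1) (hr : ‖r‖ < 1) :
    HasSum (fun m : ℕ ↦ q ^ (m + 1) / (1 - r ^ (m + 1)))
      (∑' p : ℕ × ℕ, q ^ (p.1 + 1) * r ^ ((p.1 + 1) * p.2)) := by
  refine (summable_pow_succ_mul_pow_succ_mul hq hr).hasSum.prod_fiberwise fun m ↦ ?_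
  have hratio : ‖r ^ (m + 1)‖ < 1 := by
    simpa only [norm_pow] using pow_lt_one₀ (norm_nonneg r) hr m.succ_ne_zero
  simpa only [pow_mul, div_eq_mul_inv] using
    (hasSum_geometric_of_norm_lt_one hratio).mul_left (q ^ (m + 1))

theorem hasSum_mul_pow_div_one_sub_mul_pow {𝕜 : Type*} [NormedField 𝕜] [CompleteSpace 𝕜]
    {q r : 𝕜} (hq : ‖q‖ < 1) (hr : ‖r‖ < 1) :
    HasSum (fun k : ℕ ↦ q * r ^ k / (1 - q * r ^ k))
      (∑' p : ℕ × ℕ, q ^ (p.1 + 1) * r ^ ((p.1 + 1) * p.2)) := by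
  have hswap : HasSum (fun p : ℕ × ℕ ↦ q ^ (p.2 + 1) * r ^ ((p.2 + 1) * p.1))
      (∑' p : ℕ × ℕ, q ^ (p.1 + 1) * r ^ ((p.1 + 1) * p.2)) := by
    simpa only [Function.comp_def, Equiv.prodComm_apply, Prod.fst_swap, Prod.snd_swap] using
      (Equiv.prodComm ℕ ℕ).hasSum_iff.mpr (summable_pow_succ_mul_pow_succ_mul hq hr).hasSum
  refine hswap.prod_fiberwise fun k ↦ ?_
  have hratio : ‖q * r ^ k‖ < 1 := by
    rw [norm_mul, norm_pow]
    exact mul_lt_one_of_nonneg_of_lt_one_left (norm_nonneg q) hq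
      (pow_le_one₀ (norm_nonneg r) hr.le)
  have hterm (m : ℕ) : q ^ (m + 1) * r ^ ((m + 1) * k) = q * r ^ k * (q * r ^ k) ^ m := by ring
  simpa only [hterm, div_eq_mul_inv] using
    (hasSum_geometric_of_norm_lt_one hratio).mul_left (q * r ^ k)

theorem norm_cexp_lt_one_iff {z : ℂ} : ‖Complex.exp z‖ < 1 ↔ z.re < 0 := by
  rw [Complex.norm_exp, Real.exp_lt_one_iff]

theorem cexp_mul_natCast_succ_mul (c z : ℂ) (m : ℕ) :
    Complex.exp (c * ((m : ℂ) + 1) * z) = Complex.exp (c * z) ^ (m + 1) := by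
  rw [← Complex.exp_nat_mul]
  congr 1
  push_cast
  ring

theorem cexp_neg_add_two_mul_add_one_mul (s z : ℂ) (k : ℕ) :
    Complex.exp (-(s + 2 * k + 1) * z) =
      Complex.exp (-(s + 1) * z) * Complex.exp (-2 * z) ^ k := by
  rw [← Complex.exp_nat_mul, ← Complex.exp_add]
  congr 1
  ring

theorem funnel_series_rearrangement_general {ℓ s : ℂ} (hℓ : 0 < ℓ.re)
    (hs : 0 < ((s + 1) * ℓ).re) :
    Summable (fun m : ℕ =>
        Complex.exp (-(s + 1) * ((m : ℂ) + 1) * ℓ)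
          / (1 - Complex.exp (-2 * ((m : ℂ) + 1) * ℓ))) ∧
    Summable (fun k : ℕ =>
        Complex.exp (-(s + 2 * k + 1) * ℓ) / (1 - Complex.exp (-(s + 2 * k + 1) * ℓ))) ∧
    (∑' m : ℕ, Complex.exp (-(s + 1) * ((m : ℂ) + 1) * ℓ)
        / (1 - Complex.exp (-2 * ((m : ℂ) + 1) * ℓ))) =
      ∑' k : ℕ, Complex.exp (-(s + 2 * k + 1) * ℓ)
        / (1 - Complex.exp (-(s + 2 * k + 1) * ℓ)) := by
  have hq : ‖Complex.exp (-(s + 1) * ℓ)‖ < 1 := by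
    rwa [norm_cexp_lt_one_iff, neg_mul, Complex.neg_re, neg_lt_zero]
  have hr : ‖Complex.exp (-2 * ℓ)‖ < 1 := by
    simpa [norm_cexp_lt_one_iff] using hℓ
  have hleft := hasSum_pow_succ_div_one_sub_pow_succ hq hr
  have hright := hasSum_mul_pow_div_one_sub_mul_pow hq hr
  simp only [cexp_mul_natCast_succ_mul, cexp_neg_add_two_mul_add_one_mul]
  exact ⟨hleft.summable, hright.summable, hleft.tsum_eq.trans hright.tsum_eq.symm⟩

/-- The series rearrangement underlying the evaluation of the regularized resolvent trace
of a hyperbolic funnel (Proposition 2.3 of the paper): for `ℓ > 0` and `Re s > -1`, both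
series below converge and
`∑_{m=1}^∞ e^{-(s+1)mℓ}/(1 - e^{-2mℓ}) = ∑_{k=0}^∞ e^{-(s+2k+1)ℓ}/(1 - e^{-(s+2k+1)ℓ})`. -/
theorem funnel_series_rearrangement (ℓ : ℝ) (hl : 0 < ℓ) (s : ℂ) (hs : -1 < s.re) :
    Summable (fun m : ℕ =>
        Complex.exp (-(s + 1) * ((m : ℂ) + 1) * ℓ)
          / (1 - Complex.exp (-2 * ((m : ℂ) + 1) * ℓ))) ∧
    Summable (fun k : ℕ =>
        Complex.exp (-(s + 2 * k + 1) * ℓ) / (1 - Complex.exp (-(s + 2 * k + 1) * ℓ))) ∧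
    (∑' m : ℕ, Complex.exp (-(s + 1) * ((m : ℂ) + 1) * ℓ)
        / (1 - Complex.exp (-2 * ((m : ℂ) + 1) * ℓ))) =
      ∑' k : ℕ, Complex.exp (-(s + 2 * k + 1) * ℓ)
        / (1 - Complex.exp (-(s + 2 * k + 1) * ℓ)) := by
  have hs' : 0 < (s + 1).re := by simpa using neg_lt_iff_pos_add.mp hs
  exact funnel_series_rearrangement_general hl
    (by simpa only [Complex.re_mul_ofReal] using mul_pos hs' hl)
end
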